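/- arXiv:1212.2107 — 2 statements merged into one kernel-verified Lean document; each statement's English description precedes it below -/
import Mathlib

section
/- For every η ∈ (0,1), q ∈ [2,∞) and p ∈ (1,q] there exists a constant K = K(η,p,q) ∈ (0,∞) with the following property. If (X,‖·‖_X) is a Banach space satisfying δ_X(ε) ≥ (ηε)^q for every ε ∈ (0,1), then for every finitely supported f : ℍ → X (i.e., f(x) = 0 for all but finitely many x ∈ ℍ) one has (∑_{k=1}^{∞} k^{−1−q/2} (∑_{x ∈ ℍ} ‖f(xc^k) − f(x)‖_X^p)^{q/p})^{1/q} ≤ K (∑_{x ∈ ℍ} (‖f(xa) − f(x)‖_X^p + ‖f(xb) − f(x)‖_X^p))^{1/p}. -/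
/-- The discrete Heisenberg group, as ℤ³ with the Heisenberg multiplication
(equivalently, unit upper-triangular 3×3 integer matrices). -/
@[ext]
structure DH where
  x : ℤ
  y : ℤ
  z : ℤ

namespace DH

instance : Mul DH := ⟨fun a b => ⟨a.x + b.x, a.y + b.y, a.z + b.z + a.x * b.y⟩⟩
instance : One DH := ⟨⟨0, 0, 0⟩⟩
instance : Inv DH := ⟨fun a => ⟨-a.x, -a.y, -a.z + a.x * a.y⟩⟩

lemma mul_def (a b : DH) : a * b = ⟨a.x + b.x, a.y + b.y, a.z + b.z + a.x * b.y⟩ := rfl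
lemma one_def : (1 : DH) = ⟨0, 0, 0⟩ := rfl
lemma inv_def (a : DH) : a⁻¹ = ⟨-a.x, -a.y, -a.z + a.x * a.y⟩ := rfl

instance : Group DH where
  mul_assoc a b c := by
    simp only [mul_def, mk.injEq]
    refine ⟨by ring, by ring, by ring⟩
  one_mul a := by simp [mul_def, one_def]
  mul_one a := by simp [mul_def, one_def]
  inv_mul_cancel a := by
    simp only [mul_def, inv_def, one_def, mk.injEq]
    refine ⟨by ring, by ring, by ring⟩

/-- The generator `a`. -/
def gA : DH := ⟨1, 0, 0⟩

/-- The generator `b`. -/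
def gB : DH := ⟨0, 1, 0⟩

/-- The commutator `c = aba⁻¹b⁻¹`, a generator of the center. -/
def gC : DH := gA * gB * gA⁻¹ * gB⁻¹

/-- Word length with respect to the symmetric generating set `{a, b, a⁻¹, b⁻¹}`. -/
noncomputable def wordLen (g : DH) : ℕ :=
  sInf {n | ∃ l : List DH, l.length = n ∧
    (∀ s ∈ l, s ∈ ({gA, gB, gA⁻¹, gB⁻¹} : Set DH)) ∧ l.prod = g}

/-- The left-invariant word metric on the discrete Heisenberg group. -/
noncomputable def dW (g h : DH) : ℕ := wordLen (g⁻¹ * h)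

/-- The closed ball of radius `n` centered at the identity. -/
def Ball (n : ℕ) : Set DH := {g | dW g 1 ≤ n}

end DH

theorem sum_rpow_le_of_le_mul_add {q ρ : ℝ} (hq : 1 ≤ q) (hρ0 : 0 ≤ ρ) (hρ1 : ρ < 1)
    {T d : ℕ → ℝ} (hT : ∀ n, 0 ≤ T n) (hd : ∀ n, 0 ≤ d n) (h0 : T 0 ≤ d 0)
    (hs : ∀ n, T (n + 1) ≤ ρ * T n + d (n + 1)) (N : ℕ) :
    ∑ n ∈ Finset.range N, T n ^ q ≤ (1 / (1 - ρ)) ^ q * ∑ n ∈ Finset.range N, d n ^ q := by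
  have h1 : 0 < 1 - ρ := by linarith
  set c : ℝ := 1 / (1 - ρ) with hc
  have hc0 : 0 < c := by positivity
  have hc1 : (1 - ρ) * c = 1 := by rw [hc]; field_simp
  have step : ∀ n, T (n + 1) ^ q ≤ ρ * T n ^ q + (1 - ρ) * (c ^ q * d (n + 1) ^ q) := by
    intro n
    have e : ρ * T n + d (n + 1) = ρ * T n + (1 - ρ) * (c * d (n + 1)) := by
      rw [← mul_assoc, hc1, one_mul]
    have := (convexOn_rpow hq).2 (hT n) (mul_nonneg hc0.le (hd (n + 1)) : (0 : ℝ) ≤ _) hρ0 h1.le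
      (by ring)
    simp only [smul_eq_mul] at this
    rw [← e, Real.mul_rpow hc0.le (hd _)] at this
    exact (Real.rpow_le_rpow (hT _) (hs n) (by linarith)).trans this
  have base : T 0 ^ q ≤ (1 - ρ) * (c ^ q * d 0 ^ q) := by
    have hcq : c ≤ c ^ q := by
      have : 1 ≤ c := by rw [hc, le_div_iff₀ h1]; linarith
      simpa using Real.rpow_le_rpow_of_exponent_le this hq
    have := Real.rpow_le_rpow (hT 0) h0 (by linarith : 0 ≤ q)
    have h3 : 0 ≤ d 0 ^ q := Real.rpow_nonneg (hd 0) q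
    calc T 0 ^ q ≤ d 0 ^ q := this
      _ = (1 - ρ) * (c * d 0 ^ q) := by rw [← mul_assoc, hc1, one_mul]
      _ ≤ _ := by gcongr
  have key : ∀ N, ∑ n ∈ Finset.range (N + 1), T n ^ q + ρ / (1 - ρ) * T N ^ q
      ≤ c ^ q * ∑ n ∈ Finset.range (N + 1), d n ^ q := by
    intro N
    have e : ∀ t : ℝ, t + ρ / (1 - ρ) * t = c * t := by
      intro t; rw [hc]; field_simp; ring
    induction N with
    | zero =>
      simp only [zero_add, Finset.sum_range_one]
      rw [e]
      calc _ ≤ c * ((1 - ρ) * (c ^ q * d 0 ^ q)) := by gcongr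
        _ = _ := by rw [← mul_assoc, mul_comm c, hc1, one_mul]
    | succ N ih =>
      rw [Finset.sum_range_succ, add_assoc, e, Finset.sum_range_succ (fun n => d n ^ q), mul_add]
      have : c * T (N + 1) ^ q ≤ ρ / (1 - ρ) * T N ^ q + c ^ q * d (N + 1) ^ q := by
        calc _ ≤ c * (ρ * T N ^ q + (1 - ρ) * (c ^ q * d (N + 1) ^ q)) := by
              have := step N; gcongr
          _ = ρ * c * T N ^ q + ((1 - ρ) * c) * (c ^ q * d (N + 1) ^ q) := by ring
          _ = _ := by rw [hc1, one_mul, hc, mul_one_div]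
      linarith
  cases N with
  | zero => simp
  | succ N =>
    have := key N
    have h2 : 0 ≤ ρ / (1 - ρ) * T N ^ q := by
      have := Real.rpow_nonneg (hT N) q; positivity
    linarith

section Operators

variable {Y : Type*} [NormedAddCommGroup Y] [NormedSpace ℝ Y]

theorem norm_pow_apply {T : Module.End ℝ Y} (hT : ∀ y, ‖T y‖ = ‖y‖) (k : ℕ) (y : Y) :
    ‖(T ^ k) y‖ = ‖y‖ := by
  induction k with
  | zero => simp
  | succ k ih => rw [pow_succ', Module.End.mul_apply, hT, ih]

theorem norm_pow_add_apply_sub_le {T : Module.End ℝ Y} (hT : ∀ y, ‖T y‖ = ‖y‖) (j k : ℕ) (y : Y) :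
    ‖(T ^ (j + k)) y - y‖ ≤ ‖(T ^ j) y - y‖ + ‖(T ^ k) y - y‖ := by
  have : (T ^ (j + k)) y - y = (T ^ j) ((T ^ k) y - y) + ((T ^ j) y - y) := by
    rw [pow_add, Module.End.mul_apply, map_sub]; abel
  rw [this]
  refine (norm_add_le _ _).trans ?_
  rw [norm_pow_apply hT, add_comm]

theorem norm_pow_apply_sub_le {T : Module.End ℝ Y} (hT : ∀ y, ‖T y‖ = ‖y‖) (k : ℕ) (y : Y) :
    ‖(T ^ k) y - y‖ ≤ k * ‖T y - y‖ := by
  induction k with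
  | zero => simp
  | succ k ih =>
    have := norm_pow_add_apply_sub_le hT k 1 y
    rw [pow_one] at this
    push_cast
    linarith

/-- The average of the first `2 ^ m` powers of `C`. -/
noncomputable def dyadicAverage (C : Module.End ℝ Y) : ℕ → Module.End ℝ Y
  | 0 => 1
  | m + 1 => (1 / 2 : ℝ) • (dyadicAverage C m + C ^ 2 ^ m * dyadicAverage C m)

/-- The difference between `dyadicAverage C m` and its translate by `C ^ 2 ^ m`. -/
noncomputable def dyadicDiff (C : Module.End ℝ Y) (m : ℕ) : Module.End ℝ Y :=
  dyadicAverage C m - C ^ 2 ^ m * dyadicAverage C m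

theorem commute_dyadicAverage {A C : Module.End ℝ Y} (h : Commute A C) (m : ℕ) :
    Commute A (dyadicAverage C m) := by
  induction m with
  | zero => exact Commute.one_right A
  | succ m ih => exact (ih.add_right ((h.pow_right _).mul_right ih)).smul_right _

theorem commute_dyadicDiff {A C : Module.End ℝ Y} (h : Commute A C) (m : ℕ) :
    Commute A (dyadicDiff C m) :=
  (commute_dyadicAverage h m).sub_right ((h.pow_right _).mul_right (commute_dyadicAverage h m))

theorem dyadicAverage_sub_succ (C : Module.End ℝ Y) (m : ℕ) (y : Y) :
    dyadicAverage C m y - dyadicAverage C (m + 1) y = (1 / 2 : ℝ) • dyadicDiff C m y := by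
  simp only [dyadicAverage, dyadicDiff, LinearMap.smul_apply, LinearMap.add_apply,
    LinearMap.sub_apply]
  module

theorem norm_dyadicAverage_le {C : Module.End ℝ Y} (hC : ∀ y, ‖C y‖ = ‖y‖) (m : ℕ) (y : Y) :
    ‖dyadicAverage C m y‖ ≤ ‖y‖ := by
  induction m with
  | zero => simp [dyadicAverage]
  | succ m ih =>
    simp only [dyadicAverage, LinearMap.smul_apply, LinearMap.add_apply, Module.End.mul_apply]
    rw [norm_smul]
    have := norm_add_le (dyadicAverage C m y) ((C ^ 2 ^ m) (dyadicAverage C m y))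
    rw [norm_pow_apply hC] at this
    norm_num
    linarith

theorem sum_norm_dyadicDiff_rpow_le {q κ : ℝ}
    (hY : ∀ x y : Y, ‖x‖ = ‖y‖ → (‖x + y‖ / 2) ^ q + κ * ‖x - y‖ ^ q ≤ ‖x‖ ^ q)
    {C : Module.End ℝ Y} (hC : ∀ y, ‖C y‖ = ‖y‖) (N : ℕ) (y : Y) :
    κ * ∑ m ∈ Finset.range N, ‖dyadicDiff C m y‖ ^ q ≤ ‖y‖ ^ q := by
  suffices h : ‖dyadicAverage C N y‖ ^ q + κ * ∑ m ∈ Finset.range N, ‖dyadicDiff C m y‖ ^ q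
      ≤ ‖y‖ ^ q by
    have := Real.rpow_nonneg (norm_nonneg (dyadicAverage C N y)) q
    linarith
  induction N with
  | zero => simp [dyadicAverage]
  | succ N ih =>
    have h := hY (dyadicAverage C N y) ((C ^ 2 ^ N) (dyadicAverage C N y))
      (norm_pow_apply hC _ _).symm
    have e : ‖dyadicAverage C (N + 1) y‖
        = ‖dyadicAverage C N y + (C ^ 2 ^ N) (dyadicAverage C N y)‖ / 2 := by
      simp only [dyadicAverage, LinearMap.smul_apply, LinearMap.add_apply, Module.End.mul_apply]
      rw [norm_smul]
      norm_num
      ring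
    rw [Finset.sum_range_succ, mul_add, e]
    have e2 : dyadicDiff C N y = dyadicAverage C N y - (C ^ 2 ^ N) (dyadicAverage C N y) := rfl
    rw [e2]
    linarith

theorem norm_pow_apply_sub_le_sum_dyadicDiff {C : Module.End ℝ Y} (hC : ∀ y, ‖C y‖ = ‖y‖)
    (n : ℕ) (v : Y) :
    ‖(C ^ 2 ^ n) v - v‖ ≤ ∑ m ∈ Finset.range (n + 1), ‖dyadicDiff C m v‖ := by
  have tele : ∀ n, v = ∑ m ∈ Finset.range n, (1 / 2 : ℝ) • dyadicDiff C m v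
      + dyadicAverage C n v := by
    intro n
    induction n with
    | zero => simp [dyadicAverage]
    | succ n ih =>
      rw [Finset.sum_range_succ, ← dyadicAverage_sub_succ]
      conv_lhs => rw [ih]
      abel
  set S := ∑ m ∈ Finset.range n, (1 / 2 : ℝ) • dyadicDiff C m v with hS
  have e : (C ^ 2 ^ n) v - v = ((C ^ 2 ^ n) S - S) - dyadicDiff C n v := by
    have e2 : dyadicDiff C n v = dyadicAverage C n v - (C ^ 2 ^ n) (dyadicAverage C n v) := rfl
    conv_lhs => rw [tele n]
    rw [e2, map_add]
    abel
  have hSn : ‖S‖ ≤ 1 / 2 * ∑ m ∈ Finset.range n, ‖dyadicDiff C m v‖ := by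
    rw [Finset.mul_sum]
    refine norm_sum_le_of_le _ fun m _ => ?_
    rw [norm_smul]; norm_num
  rw [e, Finset.sum_range_succ]
  have h1 := norm_sub_le ((C ^ 2 ^ n) S - S) (dyadicDiff C n v)
  have h2 := norm_sub_le ((C ^ 2 ^ n) S) S
  rw [norm_pow_apply hC] at h2
  linarith

theorem pow_mul_pow_eq_of_commutator {R : Type*} [Monoid R] {A B C : R} (hAB : A * B = C * B * A)
    (hAC : Commute A C) (hBC : Commute B C) (s t : ℕ) :
    A ^ s * B ^ t = C ^ (s * t) * B ^ t * A ^ s := by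
  have h1 : ∀ t : ℕ, A * B ^ t = C ^ t * B ^ t * A := by
    intro t
    induction t with
    | zero => simp
    | succ t ih =>
      calc A * B ^ (t + 1) = A * B ^ t * B := by rw [pow_succ, mul_assoc]
        _ = C ^ t * B ^ t * (A * B) := by rw [ih, mul_assoc]
        _ = C ^ t * (B ^ t * C) * B * A := by rw [hAB]; simp only [mul_assoc]
        _ = C ^ (t + 1) * B ^ (t + 1) * A := by
          rw [(hBC.pow_left t).eq, pow_succ C, pow_succ B]; simp only [mul_assoc]
  induction s with
  | zero => simp
  | succ s ih =>
    calc A ^ (s + 1) * B ^ t = A * (A ^ s * B ^ t) := by rw [pow_succ', mul_assoc]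
      _ = (A * C ^ (s * t)) * B ^ t * A ^ s := by rw [ih]; simp only [mul_assoc]
      _ = C ^ (s * t) * (A * B ^ t) * A ^ s := by
        rw [(hAC.pow_right _).eq]; simp only [mul_assoc]
      _ = C ^ ((s + 1) * t) * B ^ t * A ^ (s + 1) := by
        rw [h1, add_mul, one_mul, pow_add, pow_succ' A]; simp only [mul_assoc]

theorem norm_center_pow_apply_sub_le {A B C : Module.End ℝ Y} (hA : ∀ y, ‖A y‖ = ‖y‖)
    (hB : ∀ y, ‖B y‖ = ‖y‖) (hAB : A * B = C * B * A)
    (hAC : Commute A C) (hBC : Commute B C) (s t : ℕ) (w : Y) :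
    ‖(C ^ (s * t)) w - w‖ ≤ 2 * (s * ‖A w - w‖) + 2 * (t * ‖B w - w‖) := by
  set a := A ^ s with ha
  set b := B ^ t with hb
  set c := C ^ (s * t) with hc
  have hab : a * b = c * b * a := pow_mul_pow_eq_of_commutator hAB hAC hBC s t
  have hca : Commute c (b * a) :=
    ((hBC.pow_pow t (s * t)).symm).mul_right ((hAC.pow_pow s (s * t)).symm)
  have na : ∀ y, ‖a y‖ = ‖y‖ := norm_pow_apply hA s
  have nb : ∀ y, ‖b y‖ = ‖y‖ := norm_pow_apply hB t
  have e : b (a (c w - w)) = a (b w - w) - (b w - w) - (b (a w - w) - (a w - w)) := by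
    have e1 : b (a (c w)) = a (b w) := by
      change (b * a * c) w = (a * b) w
      rw [hab, ← hca.eq, mul_assoc]
    simp only [map_sub, e1]
    abel
  have h1 : ‖c w - w‖ = ‖b (a (c w - w))‖ := by rw [nb, na]
  rw [h1, e]
  have h2 := norm_sub_le (a (b w - w) - (b w - w)) (b (a w - w) - (a w - w))
  have h3 := norm_sub_le (a (b w - w)) (b w - w)
  have h4 := norm_sub_le (b (a w - w)) (a w - w)
  rw [na] at h3
  rw [nb] at h4
  have h5 := norm_pow_apply_sub_le hA s w
  have h6 := norm_pow_apply_sub_le hB t w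
  linarith

theorem norm_dyadicDiff_le {A B C : Module.End ℝ Y} (hA : ∀ y, ‖A y‖ = ‖y‖)
    (hB : ∀ y, ‖B y‖ = ‖y‖) (hC : ∀ y, ‖C y‖ = ‖y‖) (hAB : A * B = C * B * A)
    (hAC : Commute A C) (hBC : Commute B C) (m : ℕ) (v : Y) :
    ‖dyadicDiff C m v‖ ≤
      1024 * √2 ^ m * (‖dyadicDiff C m (A v - v)‖ + ‖dyadicDiff C m (B v - v)‖)
        + ‖(C ^ 2 ^ (m + 8)) v - v‖ / 256 := by
  set w := dyadicDiff C m v with hw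
  set g := ‖dyadicDiff C m (A v - v)‖ + ‖dyadicDiff C m (B v - v)‖ with hg
  have h2 : (1 : ℝ) ≤ √2 := by rw [Real.one_le_sqrt]; norm_num
  have hsq : √2 * √2 = (2 : ℝ) := Real.mul_self_sqrt (by norm_num)
  have hs4 : √2 ≤ 2 := by nlinarith
  have hAw : A w - w = dyadicDiff C m (A v - v) := by
    rw [map_sub, ← Module.End.mul_apply, (commute_dyadicDiff hAC m).eq, Module.End.mul_apply]
  have hBw : B w - w = dyadicDiff C m (B v - v) := by
    rw [map_sub, ← Module.End.mul_apply, (commute_dyadicDiff hBC m).eq, Module.End.mul_apply]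
  have h1 : ‖(C ^ 2 ^ m) w - w‖ ≤ 4 * √2 ^ m * g := by
    have hpow : 2 ^ m = 2 ^ (m / 2) * 2 ^ (m - m / 2) := by
      rw [← pow_add]; congr 1; omega
    have := norm_center_pow_apply_sub_le hA hB hAB hAC hBC (2 ^ (m / 2)) (2 ^ (m - m / 2)) w
    rw [← hpow, hAw, hBw] at this
    have sq : ∀ k : ℕ, ((2 ^ k : ℕ) : ℝ) = √2 ^ (2 * k) := by
      intro k; push_cast; rw [pow_mul, pow_two, hsq]
    have b1 : ((2 ^ (m / 2) : ℕ) : ℝ) ≤ 2 * √2 ^ m := by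
      rw [sq]
      have : √2 ^ (2 * (m / 2)) ≤ √2 ^ m := pow_le_pow_right₀ h2 (by omega)
      have : 0 ≤ √2 ^ m := by positivity
      linarith
    have b2 : ((2 ^ (m - m / 2) : ℕ) : ℝ) ≤ 2 * √2 ^ m := by
      rw [sq]
      calc √2 ^ (2 * (m - m / 2)) ≤ √2 ^ (m + 1) := pow_le_pow_right₀ h2 (by omega)
        _ = √2 * √2 ^ m := by rw [pow_succ']
        _ ≤ _ := by gcongr
    calc _ ≤ _ := this
      _ ≤ 2 * (2 * √2 ^ m * ‖dyadicDiff C m (A v - v)‖)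
          + 2 * (2 * √2 ^ m * ‖dyadicDiff C m (B v - v)‖) := by gcongr
      _ = _ := by rw [hg]; ring
  have hCm : ∀ y, ‖(C ^ 2 ^ m) y‖ = ‖y‖ := norm_pow_apply hC _
  have hgeom : ∑ k ∈ Finset.range 256, ((C ^ 2 ^ m) ^ k) w
      = - dyadicAverage C m ((C ^ 2 ^ (m + 8)) v - v) := by
    have e1 : (∑ k ∈ Finset.range 256, (C ^ 2 ^ m) ^ k) * dyadicDiff C m
        = (1 - C ^ 2 ^ (m + 8)) * dyadicAverage C m := by
      have : dyadicDiff C m = (1 - C ^ 2 ^ m) * dyadicAverage C m := by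
        rw [sub_mul, one_mul]; rfl
      rw [this, ← mul_assoc, geom_sum_mul_neg, ← pow_mul, pow_add]
      norm_num
    have e2 : dyadicAverage C m * (1 - C ^ 2 ^ (m + 8)) = (1 - C ^ 2 ^ (m + 8)) * dyadicAverage C m :=
      ((Commute.one_left _).sub_left
        ((commute_dyadicAverage (Commute.refl C) m).pow_left _)).eq.symm
    have := congrArg (fun T => T v) (e1.trans e2.symm)
    simp only [Module.End.mul_apply, LinearMap.sub_apply, LinearMap.sum_apply,
      Module.End.one_apply] at this
    rw [this, ← map_neg, neg_sub]
  have hsum : ‖∑ k ∈ Finset.range 256, (((C ^ 2 ^ m) ^ k) w - w)‖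
      ≤ 256 * (256 * (4 * √2 ^ m * g)) := by
    have : ∀ k ∈ Finset.range 256, ‖((C ^ 2 ^ m) ^ k) w - w‖ ≤ 256 * (4 * √2 ^ m * g) := by
      intro k hk
      have hk' : (k : ℝ) ≤ 256 := by exact_mod_cast (Finset.mem_range.1 hk).le
      refine (norm_pow_apply_sub_le hCm k w).trans ?_
      gcongr
    refine (norm_sum_le_of_le _ this).trans ?_
    simp
  rw [Finset.sum_sub_distrib, hgeom, Finset.sum_const, Finset.card_range] at hsum
  have h3 := norm_dyadicAverage_le hC m ((C ^ 2 ^ (m + 8)) v - v)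
  set z := dyadicAverage C m ((C ^ 2 ^ (m + 8)) v - v) with hz
  have h4 : 256 * ‖w‖ ≤ ‖-z - 256 • w‖ + ‖z‖ := by
    have e : 256 • w = -((-z - 256 • w) + z) := by abel
    have e2 : ‖(256 : ℕ) • w‖ = 256 * ‖w‖ := by
      rw [← Nat.cast_smul_eq_nsmul ℝ, norm_smul]; norm_num
    rw [← e2, e, norm_neg, ← e]
    exact norm_add_le _ _
  linarith

theorem add_rpow_le_two_rpow_mul {a b q : ℝ} (ha : 0 ≤ a) (hb : 0 ≤ b) (hq : 0 ≤ q) :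
    (a + b) ^ q ≤ 2 ^ q * (a ^ q + b ^ q) := by
  have h1 : (a + b) ^ q ≤ (2 * max a b) ^ q :=
    Real.rpow_le_rpow (by positivity)
      (by linarith [le_max_left a b, le_max_right a b]) hq
  rw [Real.mul_rpow (by norm_num) (le_max_of_le_left ha)] at h1
  refine h1.trans ?_
  gcongr
  have ha' := Real.rpow_nonneg ha q
  have hb' := Real.rpow_nonneg hb q
  rcases max_choice a b with h | h <;> rw [h] <;> linarith

theorem inv_sqrt_two_le : (√2)⁻¹ ≤ (3 / 4 : ℝ) := by
  rw [inv_le_comm₀ (by positivity) (by norm_num)]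
  apply Real.le_sqrt_of_sq_le
  norm_num

theorem sum_partialSum_div_rpow_le {q : ℝ} (hq : 1 ≤ q) {u : ℕ → ℝ} (hu : ∀ n, 0 ≤ u n) (N : ℕ) :
    ∑ n ∈ Finset.range N, ((∑ m ∈ Finset.range (n + 1), u m) / √2 ^ n) ^ q
      ≤ 4 ^ q * ∑ n ∈ Finset.range N, (u n / √2 ^ n) ^ q := by
  have hρ := inv_sqrt_two_le
  have h := sum_rpow_le_of_le_mul_add hq (ρ := (√2)⁻¹) (by positivity) (by linarith)
    (T := fun n => (∑ m ∈ Finset.range (n + 1), u m) / √2 ^ n) (d := fun n => u n / √2 ^ n)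
    (fun n => div_nonneg (Finset.sum_nonneg fun m _ => hu m) (by positivity))
    (fun n => div_nonneg (hu n) (by positivity)) (by simp)
    (fun n => le_of_eq (by
      rw [Finset.sum_range_succ _ (n + 1), add_div, pow_succ', ← div_div, div_eq_mul_inv _ (√2)]
      field_simp)) N
  refine h.trans ?_
  have hs : 0 ≤ ∑ n ∈ Finset.range N, (u n / √2 ^ n) ^ q :=
    Finset.sum_nonneg fun n _ => Real.rpow_nonneg (div_nonneg (hu n) (by positivity)) _
  gcongr
  · have : 0 < 1 - (√2)⁻¹ := by linarith
    positivity
  · rw [div_le_iff₀ (by linarith)]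
    linarith

theorem sum_dyadic_norm_rpow_le {q κ : ℝ} (hq : 1 ≤ q) (hκ : 0 < κ)
    (hY : ∀ x y : Y, ‖x‖ = ‖y‖ → (‖x + y‖ / 2) ^ q + κ * ‖x - y‖ ^ q ≤ ‖x‖ ^ q)
    {A B C : Module.End ℝ Y} (hA : ∀ y, ‖A y‖ = ‖y‖)
    (hB : ∀ y, ‖B y‖ = ‖y‖) (hC : ∀ y, ‖C y‖ = ‖y‖) (hAB : A * B = C * B * A)
    (hAC : Commute A C) (hBC : Commute B C) (v : Y) (N : ℕ) :
    ∑ n ∈ Finset.range N, (‖(C ^ 2 ^ n) v - v‖ / √2 ^ n) ^ q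
      ≤ 2 * 16384 ^ q / κ * (‖A v - v‖ ^ q + ‖B v - v‖ ^ q) := by
  have hq0 : 0 ≤ q := by linarith
  set E : ℕ → ℝ := fun n => ‖(C ^ 2 ^ n) v - v‖ / √2 ^ n with hE
  set d : ℕ → ℝ := fun n => ‖dyadicDiff C n v‖ / √2 ^ n with hd
  set ga : ℕ → ℝ := fun n => ‖dyadicDiff C n (A v - v)‖ with hga
  set gb : ℕ → ℝ := fun n => ‖dyadicDiff C n (B v - v)‖ with hgb
  set Γ : ℝ := 2 ^ q / κ * (‖A v - v‖ ^ q + ‖B v - v‖ ^ q) with hΓ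
  have hE0 : ∀ n, 0 ≤ E n := fun n => by positivity
  have hρ := inv_sqrt_two_le
  have hsum : Summable fun n => E n ^ q := by
    refine Summable.of_nonneg_of_le (fun n => Real.rpow_nonneg (hE0 n) _) (fun n => ?_)
      ((summable_geometric_of_lt_one (r := ((√2)⁻¹) ^ q) (by positivity)
        (Real.rpow_lt_one (by positivity) (by linarith) (by linarith))).mul_left ((2 * ‖v‖) ^ q))
    have h1 : E n ≤ (2 * ‖v‖) * (√2)⁻¹ ^ n := by
      have := norm_sub_le ((C ^ 2 ^ n) v) v
      rw [norm_pow_apply hC] at this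
      rw [hE, inv_pow, ← div_eq_mul_inv]
      simp only []
      gcongr
      linarith
    calc E n ^ q ≤ ((2 * ‖v‖) * (√2)⁻¹ ^ n) ^ q := Real.rpow_le_rpow (hE0 n) h1 hq0
      _ = _ := by
        rw [Real.mul_rpow (by positivity) (by positivity), Real.rpow_pow_comm (by positivity)]
  set S := ∑' n, E n ^ q with hS
  have hg : ∀ N, ∑ n ∈ Finset.range N, (ga n + gb n) ^ q ≤ Γ := by
    intro N
    have h1 := sum_norm_dyadicDiff_rpow_le hY hC N (A v - v)
    have h2 := sum_norm_dyadicDiff_rpow_le hY hC N (B v - v)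
    rw [← le_div_iff₀' hκ] at h1 h2
    calc ∑ n ∈ Finset.range N, (ga n + gb n) ^ q
        ≤ ∑ n ∈ Finset.range N, 2 ^ q * (ga n ^ q + gb n ^ q) :=
          Finset.sum_le_sum fun n _ =>
            add_rpow_le_two_rpow_mul (norm_nonneg _) (norm_nonneg _) hq0
      _ = 2 ^ q * (∑ n ∈ Finset.range N, ga n ^ q + ∑ n ∈ Finset.range N, gb n ^ q) := by
        rw [← Finset.mul_sum, Finset.sum_add_distrib]
      _ ≤ 2 ^ q * (‖A v - v‖ ^ q / κ + ‖B v - v‖ ^ q / κ) := by gcongr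
      _ = Γ := by rw [hΓ]; ring
  have hdle : ∀ n, d n ≤ 1024 * (ga n + gb n) + E (n + 8) / 16 := by
    intro n
    have h : ‖dyadicDiff C n v‖ ≤ 1024 * √2 ^ n * (ga n + gb n)
        + ‖(C ^ 2 ^ (n + 8)) v - v‖ / 256 := norm_dyadicDiff_le hA hB hC hAB hAC hBC n v
    have h8 : √2 ^ (n + 8) = √2 ^ n * 16 := by
      rw [pow_add, show 8 = 2 * 4 from rfl, pow_mul √2 2 4, Real.sq_sqrt (by norm_num)]
      norm_num
    have hpos : 0 < √2 ^ n := by positivity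
    simp only [hd, hE]
    rw [div_le_iff₀ hpos, h8]
    refine h.trans (le_of_eq ?_)
    field_simp
    ring
  have main : ∀ N, ∑ n ∈ Finset.range N, E n ^ q ≤ 8192 ^ q * Γ + S / 2 := by
    intro N
    have hEs : ∑ n ∈ Finset.range N, E (n + 8) ^ q ≤ S := by
      have h1 : Summable fun n => E (n + 8) ^ q :=
        hsum.comp_injective (add_left_injective 8)
      refine (h1.sum_le_tsum _ fun n _ => Real.rpow_nonneg (hE0 _) _).trans ?_
      exact Summable.tsum_le_tsum_of_inj (fun n => n + 8) (add_left_injective 8)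
        (fun n _ => Real.rpow_nonneg (hE0 _) _) (fun n => le_rfl) h1 hsum
    have hd' : ∑ n ∈ Finset.range N, d n ^ q ≤ 2 ^ q * (1024 ^ q * Γ + (1 / 16) ^ q * S) := by
      calc ∑ n ∈ Finset.range N, d n ^ q
          ≤ ∑ n ∈ Finset.range N, 2 ^ q * (1024 ^ q * (ga n + gb n) ^ q
              + (1 / 16) ^ q * E (n + 8) ^ q) := by
            refine Finset.sum_le_sum fun n _ => ?_
            have hg0 : 0 ≤ ga n + gb n := by positivity
            rw [← Real.mul_rpow (by norm_num) hg0, ← Real.mul_rpow (by norm_num) (hE0 _)]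
            refine (Real.rpow_le_rpow (by positivity) (hdle n) hq0).trans ?_
            rw [one_div, ← div_eq_inv_mul]
            exact add_rpow_le_two_rpow_mul (by positivity) (by have := hE0 (n + 8); positivity) hq0
        _ = 2 ^ q * (1024 ^ q * ∑ n ∈ Finset.range N, (ga n + gb n) ^ q
              + (1 / 16) ^ q * ∑ n ∈ Finset.range N, E (n + 8) ^ q) := by
            rw [← Finset.mul_sum, Finset.sum_add_distrib, Finset.mul_sum, Finset.mul_sum]
        _ ≤ _ := by gcongr; exact hg N
    calc ∑ n ∈ Finset.range N, E n ^ q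
        ≤ ∑ n ∈ Finset.range N,
            ((∑ m ∈ Finset.range (n + 1), ‖dyadicDiff C m v‖) / √2 ^ n) ^ q := by
          refine Finset.sum_le_sum fun n _ => Real.rpow_le_rpow (hE0 n) ?_ hq0
          simp only [hE]
          gcongr
          exact norm_pow_apply_sub_le_sum_dyadicDiff hC n v
      _ ≤ 4 ^ q * ∑ n ∈ Finset.range N, d n ^ q :=
          sum_partialSum_div_rpow_le hq (fun _ => norm_nonneg _) N
      _ ≤ 4 ^ q * (2 ^ q * (1024 ^ q * Γ + (1 / 16) ^ q * S)) := by gcongr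
      _ = 8192 ^ q * Γ + (1 / 2) ^ q * S := by
          have e1 : (8192 : ℝ) ^ q = 4 ^ q * (2 ^ q * 1024 ^ q) := by
            rw [← Real.mul_rpow, ← Real.mul_rpow] <;> norm_num
          have e2 : (1 / 2 : ℝ) ^ q = 4 ^ q * (2 ^ q * (1 / 16) ^ q) := by
            rw [← Real.mul_rpow, ← Real.mul_rpow] <;> norm_num
          rw [e1, e2]; ring
      _ ≤ _ := by
          have : (1 / 2 : ℝ) ^ q ≤ 1 / 2 := by
            simpa using Real.rpow_le_rpow_of_exponent_ge (by norm_num : (0 : ℝ) < 1 / 2)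
              (by norm_num) hq
          have hS0 : 0 ≤ S := tsum_nonneg fun n => Real.rpow_nonneg (hE0 n) _
          nlinarith
  have hfin : S ≤ 8192 ^ q * Γ + S / 2 :=
    Real.tsum_le_of_sum_range_le (fun n => Real.rpow_nonneg (hE0 n) _) main
  have e : 2 * 16384 ^ q / κ * (‖A v - v‖ ^ q + ‖B v - v‖ ^ q) = 2 * (8192 ^ q * Γ) := by
    have : (16384 : ℝ) ^ q = 8192 ^ q * 2 ^ q := by
      rw [← Real.mul_rpow] <;> norm_num
    rw [hΓ, this]; ring
  rw [e]
  have := main N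
  linarith

theorem norm_pow_apply_sub_le_sum_dyadic {C : Module.End ℝ Y} (hC : ∀ y, ‖C y‖ = ‖y‖) (v : Y)
    (n k : ℕ) (hk : k < 2 ^ n) :
    ‖(C ^ k) v - v‖ ≤ ∑ m ∈ Finset.range n, ‖(C ^ 2 ^ m) v - v‖ := by
  induction n generalizing k with
  | zero =>
    have : k = 0 := by simpa using hk
    simp [this]
  | succ n ih =>
    rw [Finset.sum_range_succ]
    rcases lt_or_ge k (2 ^ n) with h | h
    · have := ih k h
      have := norm_nonneg ((C ^ 2 ^ n) v - v)
      linarith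
    · obtain ⟨j, rfl⟩ := Nat.exists_eq_add_of_le' h
      have := ih j (by rw [pow_succ] at hk; omega)
      have := norm_pow_add_apply_sub_le hC j (2 ^ n) v
      linarith

theorem sum_norm_center_pow_rpow_le {q κ : ℝ} (hq : 1 ≤ q) (hκ : 0 < κ)
    (hY : ∀ x y : Y, ‖x‖ = ‖y‖ → (‖x + y‖ / 2) ^ q + κ * ‖x - y‖ ^ q ≤ ‖x‖ ^ q)
    {A B C : Module.End ℝ Y} (hA : ∀ y, ‖A y‖ = ‖y‖)
    (hB : ∀ y, ‖B y‖ = ‖y‖) (hC : ∀ y, ‖C y‖ = ‖y‖) (hAB : A * B = C * B * A)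
    (hAC : Commute A C) (hBC : Commute B C) (v : Y) (N : ℕ) :
    ∑ k ∈ Finset.range N, ((k : ℝ) + 1) ^ (-1 - q / 2) * ‖(C ^ (k + 1)) v - v‖ ^ q
      ≤ 2 * 65536 ^ q / κ * (‖A v - v‖ ^ q + ‖B v - v‖ ^ q) := by
  have hq0 : 0 ≤ q := by linarith
  set φ : ℕ → ℝ := fun k => ((k : ℝ) + 1) ^ (-1 - q / 2) * ‖(C ^ (k + 1)) v - v‖ ^ q with hφ
  have hφ0 : ∀ k, 0 ≤ φ k := fun k => by positivity
  set U : ℕ → ℝ := fun n => ∑ m ∈ Finset.range (n + 1), ‖(C ^ 2 ^ m) v - v‖ with hU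
  have hU0 : ∀ n, 0 ≤ U n := fun n => Finset.sum_nonneg fun m _ => norm_nonneg _
  have block : ∀ n k : ℕ, 2 ^ n ≤ k + 1 → k + 1 < 2 ^ (n + 1) →
      φ k ≤ ((2 : ℝ) ^ n)⁻¹ * (U n / √2 ^ n) ^ q := by
    intro n k h1 h2
    have h3 : ‖(C ^ (k + 1)) v - v‖ ≤ U n := norm_pow_apply_sub_le_sum_dyadic hC v _ _ h2
    have h4 : (2 : ℝ) ^ n ≤ (k : ℝ) + 1 := by exact_mod_cast h1
    have h5 : ((k : ℝ) + 1) ^ (-1 - q / 2) ≤ ((2 : ℝ) ^ n) ^ (-1 - q / 2) :=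
      Real.rpow_le_rpow_of_nonpos (by positivity) h4 (by linarith)
    have h6 : ((2 : ℝ) ^ n) ^ (-1 - q / 2) = ((2 : ℝ) ^ n)⁻¹ * ((√2 ^ n) ^ q)⁻¹ := by
      have hs : (√2 ^ n) ^ q = ((2 : ℝ) ^ n) ^ (q / 2) := by
        have e : (2 : ℝ) ^ n = (√2 ^ n) ^ (2 : ℝ) := by
          rw [Real.rpow_two, ← pow_mul, mul_comm, pow_mul, Real.sq_sqrt (by norm_num)]
        rw [e, ← Real.rpow_mul (by positivity)]
        congr 1; ring
      rw [hs, ← Real.rpow_neg (by positivity), ← Real.rpow_neg_one, ← Real.rpow_add (by positivity)]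
      congr 1
    calc φ k ≤ (((2 : ℝ) ^ n)⁻¹ * ((√2 ^ n) ^ q)⁻¹) * U n ^ q := by
          rw [← h6]; simp only [hφ]; gcongr
      _ = _ := by rw [Real.div_rpow (hU0 n) (by positivity)]; ring
  have dy : ∀ M : ℕ, ∑ k ∈ Finset.range (2 ^ M - 1), φ k
      ≤ ∑ n ∈ Finset.range M, (U n / √2 ^ n) ^ q := by
    intro M
    induction M with
    | zero => simp
    | succ M ih =>
      have hle : 2 ^ M - 1 ≤ 2 ^ (M + 1) - 1 := by rw [pow_succ]; omega
      rw [← Finset.sum_range_add_sum_Ico _ hle, Finset.sum_range_succ]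
      refine add_le_add ih ?_
      have hcard : (Finset.Ico (2 ^ M - 1) (2 ^ (M + 1) - 1)).card = 2 ^ M := by
        have := Nat.one_le_two_pow (n := M)
        rw [Nat.card_Ico, pow_succ]; omega
      refine (Finset.sum_le_card_nsmul _ _ (((2 : ℝ) ^ M)⁻¹ * (U M / √2 ^ M) ^ q)
        fun k hk => ?_).trans (le_of_eq ?_)
      · rw [Finset.mem_Ico] at hk
        exact block M k (by omega) (by omega)
      · rw [hcard, nsmul_eq_mul]
        push_cast
        rw [← mul_assoc, mul_inv_cancel₀ (by positivity), one_mul]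
  have hN : N ≤ 2 ^ N - 1 := by
    have := Nat.lt_two_pow_self (n := N); omega
  calc ∑ k ∈ Finset.range N, φ k ≤ ∑ k ∈ Finset.range (2 ^ N - 1), φ k :=
        Finset.sum_le_sum_of_subset_of_nonneg (Finset.range_mono hN) fun k _ _ => hφ0 k
    _ ≤ _ := dy N
    _ ≤ _ := sum_partialSum_div_rpow_le hq (fun _ => norm_nonneg _) N
    _ ≤ 4 ^ q * (2 * 16384 ^ q / κ * (‖A v - v‖ ^ q + ‖B v - v‖ ^ q)) := by
        gcongr
        exact sum_dyadic_norm_rpow_le hq hκ hY hA hB hC hAB hAC hBC v N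
    _ = _ := by
        have : (65536 : ℝ) ^ q = 4 ^ q * 16384 ^ q := by
          rw [← Real.mul_rpow] <;> norm_num
        rw [this]; ring

end Operators

theorem rpow_midpoint_add_le {p b : ℝ} (hp : 1 ≤ p) (hp2 : p ≤ 2) (hb0 : 0 ≤ b) (hb1 : b ≤ 1) :
    ((1 + b) / 2) ^ p + p * (p - 1) / 8 * (1 - b) ^ 2 ≤ (1 + b ^ p) / 2 := by
  have hconv : ConvexOn ℝ (Set.Icc 0 1) fun t : ℝ => t ^ p - p * (p - 1) / 2 * t ^ 2 := by
    refine convexOn_of_hasDerivWithinAt2_nonneg (convex_Icc 0 1)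
      (f' := fun t => p * t ^ (p - 1) - p * (p - 1) * t)
      (f'' := fun t => p * ((p - 1) * t ^ (p - 1 - 1)) - p * (p - 1)) ?_ ?_ ?_ ?_
    · exact ((Real.continuous_rpow_const (by linarith)).sub (by fun_prop)).continuousOn
    · intro t ht
      rw [interior_Icc] at ht
      refine HasDerivAt.hasDerivWithinAt ?_
      refine ((Real.hasDerivAt_rpow_const (Or.inl ht.1.ne')).sub
        ((hasDerivAt_pow 2 t).const_mul (p * (p - 1) / 2))).congr_deriv ?_
      norm_num
      ring
    · intro t ht
      rw [interior_Icc] at ht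
      refine HasDerivAt.hasDerivWithinAt ?_
      refine (((Real.hasDerivAt_rpow_const (Or.inl ht.1.ne')).const_mul p).sub
        ((hasDerivAt_id t).const_mul (p * (p - 1)))).congr_deriv ?_
      simp
    · intro t ht
      rw [interior_Icc] at ht
      have h1 : 1 ≤ t ^ (p - 1 - 1) :=
        Real.one_le_rpow_of_pos_of_le_one_of_nonpos ht.1 ht.2.le (by linarith)
      have h2 : 0 ≤ p * (p - 1) := mul_nonneg (by linarith) (by linarith)
      nlinarith
  have h := hconv.2 (Set.right_mem_Icc.2 zero_le_one) ⟨hb0, hb1⟩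
    (by norm_num : (0 : ℝ) ≤ 1 / 2) (by norm_num : (0 : ℝ) ≤ 1 / 2) (by norm_num)
  simp only [smul_eq_mul, Real.one_rpow] at h
  have e : (1 / 2 * 1 + 1 / 2 * b : ℝ) = (1 + b) / 2 := by ring
  rw [e] at h
  nlinarith

theorem rpow_add_half_rpow_mul_sub_le {q r s t : ℝ} (hr : 1 ≤ r) (hrq : r ≤ q) (hs : 1 / 2 ≤ s)
    (ht : 0 ≤ t) (hts : t ≤ s) : t ^ r + (1 / 2) ^ q * (s - t) ≤ s ^ r := by
  have h1 : ∀ u : ℝ, 0 ≤ u → u ^ r = u ^ (r - 1) * u := by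
    intro u hu
    rcases hu.eq_or_lt with rfl | hu
    · rw [mul_zero, Real.zero_rpow (by linarith)]
    · rw [Real.rpow_sub_one hu.ne', div_mul_cancel₀ _ hu.ne']
  have h2 : t ^ (r - 1) ≤ s ^ (r - 1) := Real.rpow_le_rpow ht hts (by linarith)
  have h3 : (1 / 2 : ℝ) ^ q ≤ s ^ (r - 1) :=
    (Real.rpow_le_rpow_of_exponent_ge (by norm_num) (by norm_num) (by linarith)).trans
      (Real.rpow_le_rpow (by norm_num) hs (by linarith))
  rw [h1 t ht, h1 s (ht.trans hts)]
  nlinarith [mul_le_mul_of_nonneg_right h2 ht, mul_le_mul_of_nonneg_right h3 (sub_nonneg.2 hts)]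

theorem half_add_rpow_rpow_le {p p' q b : ℝ} (hp' : 0 < p') (hpp : p' ≤ p) (hq : 0 ≤ q)
    (hb : 0 ≤ b) : ((1 + b ^ p') / 2) ^ (q / p') ≤ ((1 + b ^ p) / 2) ^ (q / p) := by
  have hp : 0 < p := hp'.trans_le hpp
  have hb' := Real.rpow_nonneg hb p'
  have h := (convexOn_rpow (p := p / p') (by rwa [one_le_div hp'])).2
    (zero_le_one : (0 : ℝ) ≤ 1) (hb' : (0 : ℝ) ≤ _)
    (by norm_num : (0 : ℝ) ≤ 1 / 2) (by norm_num : (0 : ℝ) ≤ 1 / 2) (by norm_num)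
  simp only [smul_eq_mul, Real.one_rpow] at h
  rw [← Real.rpow_mul hb, mul_div_cancel₀ _ hp'.ne'] at h
  have e1 : (1 / 2 * 1 + 1 / 2 * b ^ p' : ℝ) = (1 + b ^ p') / 2 := by ring
  have e2 : (1 / 2 * 1 + 1 / 2 * b ^ p : ℝ) = (1 + b ^ p) / 2 := by ring
  rw [e1, e2] at h
  have h' := Real.rpow_le_rpow (by positivity) h (by positivity : 0 ≤ q / p)
  rwa [← Real.rpow_mul (by positivity), show p / p' * (q / p) = q / p' by field_simp] at h'

section UniformConvexity

variable {X : Type*} [NormedAddCommGroup X] [NormedSpace ℝ X]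

theorem norm_half_add_rpow_le_of_norm_eq_one {η p q : ℝ} (hη : η ∈ Set.Ioo (0 : ℝ) 1)
    (hq : 2 ≤ q) (hp : 1 < p) (hp2 : p ≤ 2)
    (hX : ∀ ε ∈ Set.Ioo (0 : ℝ) 1, ∀ x y : X, ‖x‖ = 1 → ‖y‖ = 1 → ε ≤ ‖x - y‖ →
      ‖x + y‖ ≤ 2 * (1 - (η * ε) ^ q)) {x y : X} (hx : ‖x‖ = 1) (hy : ‖y‖ ≤ 1) :
    (‖x + y‖ / 2) ^ q + (p - 1) / 8 * (η / 8) ^ q * ‖x - y‖ ^ q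
      ≤ ((1 + ‖y‖ ^ p) / 2) ^ (q / p) := by
  obtain ⟨hη0, hη1⟩ := hη
  set b := ‖y‖ with hb
  set d := ‖x - y‖ with hd
  have hb0 : 0 ≤ b := norm_nonneg y
  have hd0 : 0 ≤ d := norm_nonneg _
  have hq0 : 0 < q := by linarith
  have hr : 1 ≤ q / p := by rw [one_le_div (by linarith)]; linarith
  have hrq : q / p ≤ q := div_le_self hq0.le hp.le
  have hsum : ‖x + y‖ ≤ 1 + b := by have := norm_add_le x y; rwa [hx] at this
  have hscalar := rpow_midpoint_add_le hp.le hp2 hb0 hy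
  have hmean : ((1 + b) / 2) ^ q = (((1 + b) / 2) ^ p) ^ (q / p) := by
    rw [← Real.rpow_mul (by positivity), mul_div_cancel₀ _ (by linarith)]
  have hgap0 : 0 ≤ p * (p - 1) / 8 * (1 - b) ^ 2 := by
    have : 0 ≤ p * (p - 1) := mul_nonneg (by linarith) (by linarith)
    positivity
  have hbp : 0 ≤ b ^ p := Real.rpow_nonneg hb0 p
  rcases le_or_gt (d / 4) (1 - b) with h | h
  · have h1 := rpow_add_half_rpow_mul_sub_le (q := q) hr hrq (s := (1 + b ^ p) / 2)
      (t := ((1 + b) / 2) ^ p) (by linarith) (by positivity) (by linarith)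
    rw [← hmean] at h1
    have h2 : (‖x + y‖ / 2) ^ q ≤ ((1 + b) / 2) ^ q :=
      Real.rpow_le_rpow (by positivity) (by linarith) hq0.le
    have h3 : (d / 4) ^ q ≤ (1 - b) ^ 2 := by
      refine (Real.rpow_le_rpow (by positivity) h hq0.le).trans ?_
      rw [← Real.rpow_two]
      rcases (sub_nonneg.2 hy).eq_or_lt with h0 | h0
      · rw [← h0, Real.zero_rpow hq0.ne', Real.zero_rpow two_ne_zero]
      · exact Real.rpow_le_rpow_of_exponent_ge h0 (by linarith) hq
    have h4 : (p - 1) / 8 * (η / 8) ^ q * d ^ q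
        ≤ (1 / 2) ^ q * (p * (p - 1) / 8 * (1 - b) ^ 2) := by
      calc (p - 1) / 8 * (η / 8) ^ q * d ^ q ≤ (p - 1) / 8 * (1 / 8) ^ q * d ^ q := by
            have : 0 ≤ p - 1 := by linarith
            gcongr
        _ = (1 / 2) ^ q * ((p - 1) / 8 * (d / 4) ^ q) := by
            have : (1 / 8 : ℝ) ^ q * d ^ q = (1 / 2) ^ q * (d / 4) ^ q := by
              rw [← Real.mul_rpow (by norm_num) hd0,
                ← Real.mul_rpow (by norm_num) (by positivity)]
              congr 1; ring
            rw [mul_assoc, this]; ring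
        _ ≤ (1 / 2) ^ q * (p * (p - 1) / 8 * (1 - b) ^ 2) := by
            have : p - 1 ≤ p * (p - 1) := by nlinarith
            have : 0 ≤ p - 1 := by linarith
            gcongr
    have h5 : (1 / 2 : ℝ) ^ q * (p * (p - 1) / 8 * (1 - b) ^ 2)
        ≤ (1 / 2) ^ q * ((1 + b ^ p) / 2 - ((1 + b) / 2) ^ p) := by
      gcongr; linarith
    linarith
  · have hd2 : d ≤ 2 := by
      have := norm_sub_le x y
      rw [hx] at this
      linarith
    have hb2 : 1 / 2 < b := by linarith
    have hdpos : 0 < d := by linarith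
    have hnorm : ‖b⁻¹ • y‖ = 1 := by
      rw [norm_smul, Real.norm_of_nonneg (by positivity), ← hb, inv_mul_cancel₀ (by linarith)]
    have hyy : b • (b⁻¹ • y) = y := by
      rw [smul_smul, mul_inv_cancel₀ (by linarith), one_smul]
    set z := b⁻¹ • y with hz
    have hzy : ‖z - y‖ = 1 - b := by
      have : z - y = (1 - b) • z := by rw [sub_smul, one_smul, hyy]
      rw [this, norm_smul, hnorm, mul_one, Real.norm_of_nonneg (by linarith)]
    have hε : d / 4 ≤ ‖x - z‖ := by
      have : d ≤ ‖x - z‖ + ‖z - y‖ := by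
        rw [hd, ← sub_add_sub_cancel x z y]; exact norm_add_le _ _
      linarith
    have h1 := hX (d / 4) ⟨by linarith, by linarith⟩ x z hx hnorm hε
    have h2 : ‖x + y‖ ≤ 1 + b - 2 * b * (η * (d / 4)) ^ q := by
      have e : x + y = b • (x + z) + (1 - b) • x := by
        rw [smul_add, hyy, sub_smul, one_smul]; abel
      have := norm_add_le (b • (x + z)) ((1 - b) • x)
      rw [← e, norm_smul, norm_smul, hx, Real.norm_of_nonneg hb0,
        Real.norm_of_nonneg (by linarith : 0 ≤ 1 - b)] at this
      nlinarith
    have hg0 : 0 ≤ (η * (d / 4)) ^ q := by positivity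
    have h3 : 1 / 2 * (η * (d / 4)) ^ q ≤ (1 + b) / 2 - ‖x + y‖ / 2 := by nlinarith
    have h4 := rpow_add_half_rpow_mul_sub_le (q := q) (by linarith) le_rfl
      (s := (1 + b) / 2) (t := ‖x + y‖ / 2) (by linarith) (by positivity) (by linarith)
    have h5 : (p - 1) / 8 * (η / 8) ^ q * d ^ q
        ≤ (1 / 2) ^ q * ((1 + b) / 2 - ‖x + y‖ / 2) := by
      calc (p - 1) / 8 * (η / 8) ^ q * d ^ q ≤ 1 / 2 * (η / 8) ^ q * d ^ q := by
            gcongr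
            · linarith
            · norm_num
        _ = (1 / 2) ^ q * (1 / 2 * (η * (d / 4)) ^ q) := by
            have : (η / 8) ^ q * d ^ q = (1 / 2) ^ q * (η * (d / 4)) ^ q := by
              rw [← Real.mul_rpow (by positivity) hd0,
                ← Real.mul_rpow (by norm_num) (by positivity)]
              congr 1; ring
            rw [mul_assoc, this]; ring
        _ ≤ _ := by gcongr
    have h6 : ((1 + b) / 2) ^ q ≤ ((1 + b ^ p) / 2) ^ (q / p) := by
      rw [hmean]
      exact Real.rpow_le_rpow (by positivity) (by linarith) (by linarith)
    linarith

theorem norm_half_add_rpow_add_le {η p q : ℝ} (hη : η ∈ Set.Ioo (0 : ℝ) 1)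
    (hq : 2 ≤ q) (hp : 1 < p)
    (hX : ∀ ε ∈ Set.Ioo (0 : ℝ) 1, ∀ x y : X, ‖x‖ = 1 → ‖y‖ = 1 → ε ≤ ‖x - y‖ →
      ‖x + y‖ ≤ 2 * (1 - (η * ε) ^ q)) (x y : X) :
    (‖x + y‖ / 2) ^ q + (min p 2 - 1) / 8 * (η / 8) ^ q * ‖x - y‖ ^ q
      ≤ ((‖x‖ ^ p + ‖y‖ ^ p) / 2) ^ (q / p) := by
  wlog hxy : ‖y‖ ≤ ‖x‖ generalizing x y
  · rw [add_comm x y, norm_sub_rev, add_comm (‖x‖ ^ p)]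
    exact this y x (le_of_not_ge hxy)
  have hq0 : 0 < q := by linarith
  rcases (norm_nonneg x).eq_or_lt with h0 | h0
  · have hx : x = 0 := norm_eq_zero.1 h0.symm
    have hy : y = 0 := norm_le_zero_iff.1 (by rwa [← h0] at hxy)
    subst hx hy
    simp only [add_zero, sub_zero, norm_zero, zero_div, Real.zero_rpow hq0.ne', mul_zero]
    positivity
  · set s := ‖x‖ with hs
    have hn : ∀ z : X, ‖s⁻¹ • z‖ = ‖z‖ / s := by
      intro z
      rw [norm_smul, Real.norm_of_nonneg (by positivity), inv_mul_eq_div]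
    have hx1 : ‖s⁻¹ • x‖ = 1 := by rw [hn, ← hs, div_self h0.ne']
    have hy1 : ‖s⁻¹ • y‖ ≤ 1 := by rw [hn, div_le_one h0]; exact hxy
    have h := (norm_half_add_rpow_le_of_norm_eq_one hη hq (lt_min hp one_lt_two)
      (min_le_right p 2) hX hx1 hy1).trans
      (half_add_rpow_rpow_le (lt_min (by linarith) two_pos) (min_le_left p 2) hq0.le
        (norm_nonneg _))
    rw [← smul_add, ← smul_sub, hn, hn, hn] at h
    have hsq : 0 < s ^ q := by positivity
    have e1 : (‖x + y‖ / s / 2) ^ q = (‖x + y‖ / 2) ^ q / s ^ q := by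
      rw [div_right_comm, Real.div_rpow (by positivity) h0.le]
    have e2 : (‖x - y‖ / s) ^ q = ‖x - y‖ ^ q / s ^ q :=
      Real.div_rpow (norm_nonneg _) h0.le q
    have e3 : ((1 + (‖y‖ / s) ^ p) / 2) ^ (q / p)
        = ((s ^ p + ‖y‖ ^ p) / 2) ^ (q / p) / s ^ q := by
      have hsp : 0 < s ^ p := by positivity
      have : s ^ q = (s ^ p) ^ (q / p) := by
        rw [← Real.rpow_mul h0.le, mul_div_cancel₀ _ (by linarith)]
      rw [this, ← Real.div_rpow (by positivity) hsp.le, Real.div_rpow (norm_nonneg _) h0.le]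
      congr 1
      field_simp
    rw [e1, e2, e3, mul_div_assoc', ← add_div, div_le_div_iff_of_pos_right hsq] at h
    exact h

end UniformConvexity

theorem rpow_add_rpow_le_of_hasSum {ι : Type*} {u v w : ι → ℝ} {U V W r : ℝ} (hr : 1 ≤ r)
    (hu : HasSum u U) (hv : HasSum v V) (hw : HasSum w W) (hu0 : ∀ i, 0 ≤ u i)
    (hv0 : ∀ i, 0 ≤ v i) (hw0 : ∀ i, 0 ≤ w i) (h : ∀ i, u i ^ r + v i ^ r ≤ w i ^ r) :
    U ^ r + V ^ r ≤ W ^ r := by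
  have hr0 : 0 < r := by linarith
  have htr : (ENNReal.ofReal r).toReal = r := ENNReal.toReal_ofReal hr0.le
  have : Fact (1 ≤ ENNReal.ofReal r) := ⟨by rwa [ENNReal.one_le_ofReal]⟩
  have hF := (hu.prodMk hv).mapL
    (WithLp.prodContinuousLinearEquiv (ENNReal.ofReal r) ℝ ℝ ℝ).symm.toContinuousLinearMap
  have hnorm : ∀ s t : ℝ, 0 ≤ s → 0 ≤ t →
      ‖(WithLp.toLp (ENNReal.ofReal r) (s, t) : WithLp (ENNReal.ofReal r) (ℝ × ℝ))‖
        = (s ^ r + t ^ r) ^ (1 / r) := by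
    intro s t hs ht
    rw [WithLp.prod_norm_eq_add (by rw [htr]; exact hr0), htr]
    simp [abs_of_nonneg hs, abs_of_nonneg ht]
  have hle := hF.norm_le_of_bounded hw fun i => by
    change ‖(WithLp.toLp (ENNReal.ofReal r) (u i, v i) : WithLp (ENNReal.ofReal r) (ℝ × ℝ))‖ ≤ _
    rw [hnorm _ _ (hu0 i) (hv0 i)]
    calc (u i ^ r + v i ^ r) ^ (1 / r) ≤ (w i ^ r) ^ (1 / r) :=
          Real.rpow_le_rpow (add_nonneg (Real.rpow_nonneg (hu0 i) _) (Real.rpow_nonneg (hv0 i) _))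
            (h i) (by positivity)
      _ = w i := by rw [one_div, Real.rpow_rpow_inv (hw0 i) hr0.ne']
  change ‖(WithLp.toLp (ENNReal.ofReal r) (U, V) : WithLp (ENNReal.ofReal r) (ℝ × ℝ))‖ ≤ _ at hle
  have hU := hu.nonneg hu0
  have hV := hv.nonneg hv0
  have hUV : 0 ≤ U ^ r + V ^ r := add_nonneg (Real.rpow_nonneg hU _) (Real.rpow_nonneg hV _)
  rw [hnorm _ _ hU hV] at hle
  have := Real.rpow_le_rpow (Real.rpow_nonneg hUV _) hle hr0.le
  rwa [one_div, Real.rpow_inv_rpow hUV hr0.ne'] at this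

theorem lp_norm_half_add_rpow_add_le {α X : Type*} [NormedAddCommGroup X] [NormedSpace ℝ X]
    {p q κ : ℝ} [Fact (1 ≤ ENNReal.ofReal p)] (hp : 0 < p) (hpq : p ≤ q) (hκ : 0 ≤ κ)
    (hX : ∀ x y : X, (‖x + y‖ / 2) ^ q + κ * ‖x - y‖ ^ q ≤ ((‖x‖ ^ p + ‖y‖ ^ p) / 2) ^ (q / p))
    (x y : lp (fun _ : α => X) (ENNReal.ofReal p)) (hxy : ‖x‖ = ‖y‖) :
    (‖x + y‖ / 2) ^ q + κ * ‖x - y‖ ^ q ≤ ‖x‖ ^ q := by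
  have htp : (ENNReal.ofReal p).toReal = p := ENNReal.toReal_ofReal hp.le
  have hs : ∀ z : lp (fun _ : α => X) (ENNReal.ofReal p),
      HasSum (fun i => ‖z i‖ ^ p) (‖z‖ ^ p) := by
    intro z
    have := lp.hasSum_norm (by rw [htp]; exact hp) z
    rwa [htp] at this
  have hr : 1 ≤ q / p := by rwa [one_le_div hp]
  have hq : 0 < q := hp.trans_le hpq
  have hpow : ∀ t : ℝ, 0 ≤ t → (t ^ p) ^ (q / p) = t ^ q := by
    intro t ht
    rw [← Real.rpow_mul ht, mul_div_cancel₀ _ hp.ne']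
  have hκp : (κ ^ (p / q)) ^ (q / p) = κ := by
    rw [← Real.rpow_mul hκ, div_mul_div_cancel₀ hq.ne', div_self hp.ne', Real.rpow_one]
  have hu : HasSum (fun i => (‖x i + y i‖ / 2) ^ p) ((‖x + y‖ / 2) ^ p) := by
    rw [Real.div_rpow (norm_nonneg _) two_pos.le]
    refine ((hs (x + y)).div_const (2 ^ p)).congr_fun fun i => ?_
    exact Real.div_rpow (norm_nonneg _) two_pos.le p
  have hv : HasSum (fun i => κ ^ (p / q) * ‖x i - y i‖ ^ p) (κ ^ (p / q) * ‖x - y‖ ^ p) :=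
    (hs (x - y)).mul_left _
  have hw : HasSum (fun i => (‖x i‖ ^ p + ‖y i‖ ^ p) / 2) (‖x‖ ^ p) := by
    have := ((hs x).add (hs y)).div_const 2
    rwa [← hxy, add_self_div_two] at this
  have h := rpow_add_rpow_le_of_hasSum hr hu hv hw (fun i => by positivity)
    (fun i => by positivity) (fun i => by positivity) fun i => by
      rw [hpow _ (by positivity), Real.mul_rpow (by positivity) (by positivity), hκp,
        hpow _ (norm_nonneg _)]
      exact hX (x i) (y i)
  rwa [hpow _ (by positivity), Real.mul_rpow (by positivity) (by positivity), hκp,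
    hpow _ (norm_nonneg _), hpow _ (norm_nonneg _)] at h

section Translation

variable {G X : Type*} [Group G] [NormedAddCommGroup X] [NormedSpace ℝ X]

/-- Right translation by `g` as an operator on `ℓ^p(G; X)`. -/
noncomputable def lpRightTranslate {p : ENNReal} [Fact (1 ≤ p)] (hp : 0 < p.toReal) (g : G) :
    Module.End ℝ (lp (fun _ : G => X) p) where
  toFun f := ⟨fun x => f (x * g),
    memℓp_gen (((lp.memℓp f).summable hp).comp_injective (mul_left_injective g))⟩
  map_add' _ _ := rfl
  map_smul' _ _ := rfl

theorem lpRightTranslate_apply {p : ENNReal} [Fact (1 ≤ p)] (hp : 0 < p.toReal) (g : G)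
    (f : lp (fun _ : G => X) p) (x : G) : lpRightTranslate hp g f x = f (x * g) := rfl

theorem lpRightTranslate_mul {p : ENNReal} [Fact (1 ≤ p)] (hp : 0 < p.toReal) (g h : G) :
    (lpRightTranslate hp (g * h) : Module.End ℝ (lp (fun _ : G => X) p))
      = lpRightTranslate hp g * lpRightTranslate hp h := by
  ext f x
  simp only [Module.End.mul_apply, lpRightTranslate_apply, mul_assoc]

theorem lpRightTranslate_pow {p : ENNReal} [Fact (1 ≤ p)] (hp : 0 < p.toReal) (g : G) (k : ℕ) :
    (lpRightTranslate hp (g ^ k) : Module.End ℝ (lp (fun _ : G => X) p))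
      = lpRightTranslate hp g ^ k := by
  induction k with
  | zero => ext f x; simp [lpRightTranslate_apply]
  | succ k ih => rw [pow_succ, lpRightTranslate_mul, ih, pow_succ]

theorem norm_lpRightTranslate {p : ENNReal} [Fact (1 ≤ p)] (hp : 0 < p.toReal) (g : G)
    (f : lp (fun _ : G => X) p) : ‖lpRightTranslate hp g f‖ = ‖f‖ := by
  rw [lp.norm_eq_tsum_rpow hp, lp.norm_eq_tsum_rpow hp]
  congr 1
  exact (Equiv.mulRight g).tsum_eq fun x => ‖f x‖ ^ p.toReal

end Translation

namespace DH

theorem gA_mul_gB : gA * gB = gC * gB * gA := by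
  rw [gC]; group

theorem commute_gA_gC : Commute gA gC := by
  simp [Commute, SemiconjBy, gC, gA, gB, mul_def, inv_def]

theorem commute_gB_gC : Commute gB gC := by
  simp [Commute, SemiconjBy, gC, gA, gB, mul_def, inv_def]

end DH

open DH in
/-- Theorem 3.3: the global `(p,q)` vertical-versus-horizontal Poincaré inequality
on the discrete Heisenberg group, for finitely supported functions. -/
theorem global_pq_poincare (η : ℝ) (hη : η ∈ Set.Ioo (0 : ℝ) 1)
    (q p : ℝ) (hq : 2 ≤ q) (hp : 1 < p) (hpq : p ≤ q) :
    ∃ K : ℝ, 0 < K ∧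
      ∀ (X : Type) [NormedAddCommGroup X] [NormedSpace ℝ X] [CompleteSpace X],
        (∀ ε ∈ Set.Ioo (0 : ℝ) 1, ∀ x y : X, ‖x‖ = 1 → ‖y‖ = 1 → ε ≤ ‖x - y‖ →
          ‖x + y‖ ≤ 2 * (1 - (η * ε) ^ q)) →
        ∀ f : DH → X, (Function.support f).Finite →
          (∑' k : ℕ, ((k : ℝ) + 1) ^ (-1 - q / 2) *
              (∑' x : DH, ‖f (x * gC ^ (k + 1)) - f x‖ ^ p) ^ (q / p)) ^ (1 / q) ≤
            K * (∑' x : DH,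
              (‖f (x * gA) - f x‖ ^ p + ‖f (x * gB) - f x‖ ^ p)) ^ (1 / p) := by
  have hp0 : 0 < p := by linarith
  have hq0 : 0 < q := by linarith
  set κ : ℝ := (min p 2 - 1) / 8 * (η / 8) ^ q with hκdef
  have hκ : 0 < κ := by
    have h1 : 0 < min p 2 - 1 := sub_pos.2 (lt_min hp one_lt_two)
    have h2 : 0 < η := hη.1
    positivity
  refine ⟨(2 * (2 * 65536 ^ q / κ)) ^ (1 / q), by positivity, ?_⟩
  intro X _ _ _ hX f hf
  have : Fact (1 ≤ ENNReal.ofReal p) := ⟨by rw [ENNReal.one_le_ofReal]; exact hp.le⟩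
  have htp : (ENNReal.ofReal p).toReal = p := ENNReal.toReal_ofReal hp0.le
  have hP : 0 < (ENNReal.ofReal p).toReal := by rwa [htp]
  have hY := lp_norm_half_add_rpow_add_le (α := DH) hp0 hpq hκ.le
    (norm_half_add_rpow_add_le hη hq hp hX)
  let v : lp (fun _ : DH => X) (ENNReal.ofReal p) :=
    ⟨f, (memℓp_zero hf).of_exponent_ge zero_le⟩
  let T : DH → Module.End ℝ (lp (fun _ : DH => X) (ENNReal.ofReal p)) := lpRightTranslate hP
  have hsum : ∀ g : DH, HasSum (fun x => ‖f (x * g) - f x‖ ^ p) (‖T g v - v‖ ^ p) := by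
    intro g
    have := lp.hasSum_norm hP (T g v - v)
    rwa [htp] at this
  have hcomm : ∀ g h : DH, Commute g h → Commute (T g) (T h) := by
    intro g h hgh
    rw [Commute, SemiconjBy, ← lpRightTranslate_mul, ← lpRightTranslate_mul, hgh.eq]
  have hAB : T gA * T gB = T gC * T gB * T gA := by
    rw [← lpRightTranslate_mul, ← lpRightTranslate_mul, ← lpRightTranslate_mul, gA_mul_gB]
  set α := ‖T gA v - v‖ with hα
  set β := ‖T gB v - v‖ with hβ
  have hpow : ∀ t : ℝ, 0 ≤ t → (t ^ p) ^ (q / p) = t ^ q := by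
    intro t ht
    rw [← Real.rpow_mul ht, mul_div_cancel₀ _ hp0.ne']
  have hpartial := sum_norm_center_pow_rpow_le (by linarith) hκ hY (norm_lpRightTranslate hP gA)
    (norm_lpRightTranslate hP gB) (norm_lpRightTranslate hP gC) hAB
    (hcomm _ _ commute_gA_gC) (hcomm _ _ commute_gB_gC) v
  have hterm : ∀ k : ℕ, 0 ≤ ((k : ℝ) + 1) ^ (-1 - q / 2) *
      (∑' x : DH, ‖f (x * gC ^ (k + 1)) - f x‖ ^ p) ^ (q / p) := fun k =>
    mul_nonneg (by positivity) (Real.rpow_nonneg (tsum_nonneg fun x =>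
      Real.rpow_nonneg (norm_nonneg _) p) _)
  have hlhs : ∑' k : ℕ, ((k : ℝ) + 1) ^ (-1 - q / 2) *
      (∑' x : DH, ‖f (x * gC ^ (k + 1)) - f x‖ ^ p) ^ (q / p)
      ≤ 2 * 65536 ^ q / κ * (α ^ q + β ^ q) := by
    refine Real.tsum_le_of_sum_range_le hterm fun N => ?_
    refine le_trans (le_of_eq ?_) (hpartial N)
    refine Finset.sum_congr rfl fun k _ => ?_
    rw [(hsum _).tsum_eq, hpow _ (norm_nonneg _), ← lpRightTranslate_pow]
  rw [((hsum gA).add (hsum gB)).tsum_eq]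
  set R := (α ^ p + β ^ p) ^ (1 / p) with hR
  have hα0 : 0 ≤ α := norm_nonneg _
  have hβ0 : 0 ≤ β := norm_nonneg _
  have hR0 : 0 ≤ R := by positivity
  have hαR : α ≤ R := by
    rw [hR, one_div, Real.le_rpow_inv_iff_of_pos hα0 (by positivity) hp0]
    exact le_add_of_nonneg_right (by positivity)
  have hβR : β ≤ R := by
    rw [hR, one_div, Real.le_rpow_inv_iff_of_pos hβ0 (by positivity) hp0]
    exact le_add_of_nonneg_left (by positivity)
  have hle : 2 * 65536 ^ q / κ * (α ^ q + β ^ q) ≤ 2 * (2 * 65536 ^ q / κ) * R ^ q := by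
    calc _ ≤ 2 * 65536 ^ q / κ * (R ^ q + R ^ q) := by gcongr
      _ = _ := by ring
  calc _ ≤ (2 * (2 * 65536 ^ q / κ) * R ^ q) ^ (1 / q) := by
        exact Real.rpow_le_rpow (tsum_nonneg hterm) (hlhs.trans hle) (by positivity)
    _ = _ := by
        rw [Real.mul_rpow (by positivity) (by positivity), one_div,
          Real.rpow_rpow_inv hR0 hq0.ne']
end

section
/- For every p, q ∈ [1,∞), every Banach space (X,‖·‖_X), and every smooth compactly supported f : ℍ(ℝ) → X, (∫₀^∞ (∫_{ℍ(ℝ)} ‖P_t * f(hc^t) − P_t * f(h)‖_X^p dμ(h))^{q/p} dt/t^{1+q/2})^{1/q} ≤ (8√2/π) (∫₀^∞ t^{q/2−1} ‖Q_t * f‖_{L_p(ℍ(ℝ),X)}^q dt)^{1/q}. -/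
open MeasureTheory

/-- The real Heisenberg group `ℍ(ℝ)`, identified with `ℝ³`; the Lebesgue measure
(`volume`) is a Haar measure for the Heisenberg group structure. -/
abbrev HR : Type := ℝ × ℝ × ℝ

namespace HR

/-- Right translation by the central element `c^t`: `h ↦ h·c^t`. -/
def vmul (t : ℝ) (h : HR) : HR := (h.1, h.2.1, h.2.2 + t)

/-- The Poisson kernel `P_t(u) = t/(π(t²+u²))` on `ℝ`. -/
noncomputable def Pker (t u : ℝ) : ℝ := t / (Real.pi * (t ^ 2 + u ^ 2))

/-- `Q_t(u) = ∂P_t/∂t(u) = (u²−t²)/(π(t²+u²)²)`. -/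
noncomputable def Qker (t u : ℝ) : ℝ := (u ^ 2 - t ^ 2) / (Real.pi * (t ^ 2 + u ^ 2) ^ 2)

variable {X : Type*} [NormedAddCommGroup X] [NormedSpace ℝ X]

/-- Convolution of a kernel `ψ : ℝ → ℝ` with `g : ℍ(ℝ) → X` along the center:
`(ψ*g)(x,y,z) = ∫_ℝ ψ(u) g(x,y,z−u) du`. -/
noncomputable def conv (ψ : ℝ → ℝ) (g : HR → X) (h : HR) : X :=
  ∫ u : ℝ, ψ u • g (h.1, h.2.1, h.2.2 - u)

/-- The left-invariant horizontal derivative `∂_a f = ∂f/∂x`. -/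
noncomputable def da (f : HR → X) (h : HR) : X := fderiv ℝ f h (1, 0, 0)

/-- The left-invariant horizontal derivative `∂_b f = ∂f/∂y + x·∂f/∂z`. -/
noncomputable def db (f : HR → X) (h : HR) : X :=
  fderiv ℝ f h (0, 1, 0) + h.1 • fderiv ℝ f h (0, 0, 1)

end HR

namespace HR

open Set Filter Topology

lemma Pker_nonneg {t : ℝ} (ht : 0 < t) (u : ℝ) : 0 ≤ Pker t u := by
  unfold Pker; positivity

lemma abs_Qker_le {t : ℝ} (ht : 0 < t) (u : ℝ) : |Qker t u| ≤ Pker t u / t := by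
  have hpi := Real.pi_pos
  have hd : 0 < t ^ 2 + u ^ 2 := by positivity
  have h1 : Pker t u / t = (t ^ 2 + u ^ 2) / (Real.pi * (t ^ 2 + u ^ 2) ^ 2) := by
    unfold Pker; field_simp
  rw [h1, Qker, abs_div, abs_of_pos (show 0 < Real.pi * (t ^ 2 + u ^ 2) ^ 2 by positivity)]
  gcongr
  rw [abs_le]
  constructor <;> nlinarith [sq_nonneg t, sq_nonneg u]

lemma Pker_div_le {t : ℝ} (ht : 0 < t) (u : ℝ) : Pker t u / t ≤ 1 / (Real.pi * t ^ 2) := by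
  have hpi := Real.pi_pos
  have h1 : Pker t u / t = 1 / (Real.pi * (t ^ 2 + u ^ 2)) := by
    unfold Pker; field_simp
  rw [h1]
  gcongr
  nlinarith [sq_nonneg u]

lemma Pker_le {t : ℝ} (ht : 0 < t) (u : ℝ) : Pker t u ≤ 1 / (Real.pi * t) := by
  have := Pker_div_le ht u
  rw [div_le_iff₀ ht] at this
  refine this.trans_eq ?_
  field_simp

lemma measurable_Pker : Measurable (fun x : ℝ × ℝ => Pker x.1 x.2) := by
  unfold Pker; fun_prop

lemma measurable_Qker : Measurable (fun x : ℝ × ℝ => Qker x.1 x.2) := by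
  unfold Qker; fun_prop

lemma integrable_Pker {t : ℝ} (ht : 0 < t) : Integrable (Pker t) := by
  have h := ((integrable_inv_one_add_sq.comp_div ht.ne').const_mul (1 / (Real.pi * t)))
  refine h.congr (ae_of_all _ fun u => ?_)
  have hpi := Real.pi_pos
  have hd : 0 < t ^ 2 + u ^ 2 := by positivity
  simp only [Pker]
  field_simp

lemma integrable_Qker {t : ℝ} (ht : 0 < t) : Integrable (Qker t) :=
  ((integrable_Pker ht).div_const t).mono'
    (measurable_Qker.comp measurable_prodMk_left).aestronglyMeasurable
    (ae_of_all _ (abs_Qker_le ht))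

lemma hasDerivAt_Pker {t : ℝ} (ht : 0 < t) (u : ℝ) :
    HasDerivAt (fun s => Pker s u) (Qker t u) t := by
  have hpi := Real.pi_pos
  have hd : 0 < t ^ 2 + u ^ 2 := by positivity
  have h := (hasDerivAt_id' t).div
    (((hasDerivAt_pow 2 t).add_const (u ^ 2)).const_mul Real.pi) (by positivity)
  refine h.congr_deriv ?_
  simp only [Qker]
  field_simp
  push_cast
  ring

lemma hasDerivAt_arctan_div {t : ℝ} (ht : 0 < t) (a u : ℝ) :
    HasDerivAt (fun v => Real.arctan ((v + a) / t)) (Real.pi * Pker t (u + a)) u := by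
  have hpi := Real.pi_pos
  have h := (((hasDerivAt_id u).add_const a).div_const t).arctan
  refine h.congr_deriv ?_
  simp only [Pker, id]
  field_simp

lemma tendsto_arctan_div_atTop {t : ℝ} (ht : 0 < t) (a : ℝ) :
    Tendsto (fun v => Real.arctan ((v + a) / t)) atTop (𝓝 (Real.pi / 2)) :=
  (Real.tendsto_arctan_atTop.mono_right nhdsWithin_le_nhds).comp
    ((tendsto_atTop_add_const_right _ a tendsto_id).atTop_div_const ht)

lemma tendsto_arctan_div_atBot {t : ℝ} (ht : 0 < t) (a : ℝ) :
    Tendsto (fun v => Real.arctan ((v + a) / t)) atBot (𝓝 (-(Real.pi / 2))) :=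
  (Real.tendsto_arctan_atBot.mono_right nhdsWithin_le_nhds).comp
    ((tendsto_atBot_add_const_right _ a tendsto_id).atBot_div_const ht)

lemma tendsto_linear_div_sq {l : Filter ℝ} (hl : Tendsto (fun u : ℝ => u⁻¹) l (𝓝 0))
    (h0 : ∀ᶠ u in l, u ≠ 0) (a b t : ℝ) :
    Tendsto (fun u : ℝ => (a * u + b) / (t ^ 2 + u ^ 2)) l (𝓝 0) := by
  have h := ((hl.const_mul a).add ((hl.pow 2).const_mul b)).div
    (((hl.pow 2).const_mul (t ^ 2)).add_const 1) (by norm_num)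
  simp only [mul_zero, ne_eq, OfNat.ofNat_ne_zero, not_false_eq_true, zero_pow, add_zero,
    zero_add, zero_div] at h
  refine h.congr' ?_
  filter_upwards [h0] with u hu
  have : 0 < t ^ 2 + u ^ 2 := by positivity
  simp only [Pi.div_apply]
  field_simp

/-- An antiderivative of `v ↦ π² P_r(x - v) Q_r(v)`. -/
noncomputable def PQprim (r x u : ℝ) : ℝ :=
  -(x * r / (x ^ 2 + 4 * r ^ 2) ^ 2) * Real.log (1 + (-2 * x * u + x ^ 2) / (r ^ 2 + u ^ 2)) +
    (x ^ 4 + 2 * r ^ 2 * x ^ 2 + 8 * r ^ 4) / (x ^ 2 * (x ^ 2 + 4 * r ^ 2) ^ 2) *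
      Real.arctan ((u + -x) / r) -
    2 * r ^ 2 * (3 * x ^ 2 + 4 * r ^ 2) / (x ^ 2 * (x ^ 2 + 4 * r ^ 2) ^ 2) *
      Real.arctan ((u + 0) / r) -
    r / (x * (x ^ 2 + 4 * r ^ 2)) * ((x * u + -2 * r ^ 2) / (r ^ 2 + u ^ 2))

lemma hasDerivAt_PQprim {r x : ℝ} (hr : 0 < r) (hx : x ≠ 0) (u : ℝ) :
    HasDerivAt (PQprim r x) (Real.pi ^ 2 * (Pker r (x - u) * Qker r u)) u := by
  have hpi := Real.pi_pos
  have hB : 0 < r ^ 2 + u ^ 2 := by positivity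
  have hA : 0 < r ^ 2 + (x - u) ^ 2 := by positivity
  have hs : 0 < x ^ 2 + 4 * r ^ 2 := by positivity
  have hlin (a b : ℝ) : HasDerivAt (fun u : ℝ => (a * u + b) / (r ^ 2 + u ^ 2))
      ((a * (r ^ 2 + u ^ 2) - (a * u + b) * (2 * u)) / (r ^ 2 + u ^ 2) ^ 2) u := by
    have h := (((hasDerivAt_id u).const_mul a).add_const b).div
      (((hasDerivAt_id u).pow 2).const_add (r ^ 2)) (by simpa using hB.ne')
    refine h.congr_deriv ?_
    simp
  have hAB : 1 + (-2 * x * u + x ^ 2) / (r ^ 2 + u ^ 2) =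
      (r ^ 2 + (x - u) ^ 2) / (r ^ 2 + u ^ 2) := by
    field_simp; ring
  have h := ((((((hlin (-2 * x) (x ^ 2)).const_add 1).log
      (by rw [hAB]; positivity)).const_mul (-(x * r / (x ^ 2 + 4 * r ^ 2) ^ 2))).add
    ((hasDerivAt_arctan_div hr (-x) u).const_mul
      ((x ^ 4 + 2 * r ^ 2 * x ^ 2 + 8 * r ^ 4) / (x ^ 2 * (x ^ 2 + 4 * r ^ 2) ^ 2)))).sub
    ((hasDerivAt_arctan_div hr 0 u).const_mul
      (2 * r ^ 2 * (3 * x ^ 2 + 4 * r ^ 2) / (x ^ 2 * (x ^ 2 + 4 * r ^ 2) ^ 2)))).sub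
    ((hlin x (-2 * r ^ 2)).const_mul (r / (x * (x ^ 2 + 4 * r ^ 2))))
  refine h.congr_deriv ?_
  rw [hAB]
  have hneg : (u + -x) ^ 2 = (x - u) ^ 2 := by ring
  simp only [Pker, Qker, add_zero, hneg]
  set A := r ^ 2 + (x - u) ^ 2 with hAdef
  set B := r ^ 2 + u ^ 2 with hBdef
  set s := x ^ 2 + 4 * r ^ 2 with hsdef
  field_simp
  rw [hAdef, hBdef, hsdef]
  ring

lemma tendsto_PQprim_aux {r x c d : ℝ} {l : Filter ℝ}
    (hl : Tendsto (fun u : ℝ => u⁻¹) l (𝓝 0)) (h0 : ∀ᶠ u in l, u ≠ 0)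
    (hc : Tendsto (fun v => Real.arctan ((v + -x) / r)) l (𝓝 c))
    (hd : Tendsto (fun v => Real.arctan ((v + 0) / r)) l (𝓝 d)) :
    Tendsto (PQprim r x) l
      (𝓝 ((x ^ 4 + 2 * r ^ 2 * x ^ 2 + 8 * r ^ 4) / (x ^ 2 * (x ^ 2 + 4 * r ^ 2) ^ 2) * c -
        2 * r ^ 2 * (3 * x ^ 2 + 4 * r ^ 2) / (x ^ 2 * (x ^ 2 + 4 * r ^ 2) ^ 2) * d)) := by
  have h1 := ((tendsto_linear_div_sq hl h0 (-2 * x) (x ^ 2) r).const_add 1).log (by norm_num)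
  have h := (((h1.const_mul (-(x * r / (x ^ 2 + 4 * r ^ 2) ^ 2))).add
    (hc.const_mul
      ((x ^ 4 + 2 * r ^ 2 * x ^ 2 + 8 * r ^ 4) / (x ^ 2 * (x ^ 2 + 4 * r ^ 2) ^ 2)))).sub
    (hd.const_mul
      (2 * r ^ 2 * (3 * x ^ 2 + 4 * r ^ 2) / (x ^ 2 * (x ^ 2 + 4 * r ^ 2) ^ 2)))).sub
    ((tendsto_linear_div_sq hl h0 x (-2 * r ^ 2) r).const_mul (r / (x * (x ^ 2 + 4 * r ^ 2))))
  rw [add_zero, Real.log_one, mul_zero, zero_add, mul_zero, sub_zero] at h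
  exact h

lemma integrable_Pker_sub_mul_Qker {r : ℝ} (hr : 0 < r) (x : ℝ) :
    Integrable (fun v => Pker r (x - v) * Qker r v) := by
  refine (integrable_Qker hr).bdd_mul (c := 1 / (Real.pi * r)) ?_ (ae_of_all _ fun v => ?_)
  · exact (measurable_Pker.comp (f := fun v : ℝ => (r, x - v))
      (by fun_prop)).aestronglyMeasurable
  · rw [Real.norm_of_nonneg (Pker_nonneg hr _)]
    exact Pker_le hr _

/-- The semigroup identity `P_r * Q_r = Q_{2r}`. -/
lemma integral_Pker_sub_mul_Qker {r x : ℝ} (hr : 0 < r) (hx : x ≠ 0) :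
    ∫ v, Pker r (x - v) * Qker r v = Qker (2 * r) x := by
  have hpi := Real.pi_pos
  have h := integral_of_hasDerivAt_of_tendsto (hasDerivAt_PQprim hr hx)
    ((integrable_Pker_sub_mul_Qker hr x).const_mul _)
    (tendsto_PQprim_aux tendsto_inv_atBot_zero (eventually_ne_atBot 0)
      (tendsto_arctan_div_atBot hr _) (tendsto_arctan_div_atBot hr _))
    (tendsto_PQprim_aux tendsto_inv_atTop_zero (eventually_ne_atTop 0)
      (tendsto_arctan_div_atTop hr _) (tendsto_arctan_div_atTop hr _))
  rw [integral_const_mul] at h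
  have hs : 0 < x ^ 2 + 4 * r ^ 2 := by positivity
  have h2 : Qker (2 * r) x = (x ^ 2 - 4 * r ^ 2) / (Real.pi * (x ^ 2 + 4 * r ^ 2) ^ 2) := by
    unfold Qker; ring_nf
  apply mul_left_cancel₀ (pow_ne_zero 2 hpi.ne')
  rw [h, h2]
  field_simp
  ring

lemma tendsto_Pker_atTop (u : ℝ) : Tendsto (fun s => Pker s u) atTop (𝓝 0) := by
  refine squeeze_zero' (g := fun s => Real.pi⁻¹ * s⁻¹) ?_ ?_ ?_
  · filter_upwards [eventually_gt_atTop 0] with s hs using Pker_nonneg hs u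
  · filter_upwards [eventually_gt_atTop 0] with s hs
    refine (Pker_le hs u).trans_eq ?_
    rw [one_div, mul_inv]
  · simpa using tendsto_inv_atTop_zero.const_mul Real.pi⁻¹

lemma integrableOn_Qker_two_mul {t : ℝ} (ht : 0 < t) (u : ℝ) :
    IntegrableOn (fun r => 2 * Qker (2 * r) u) (Ioi (t / 2)) := by
  have h : IntegrableOn (fun r : ℝ => (1 / (2 * Real.pi)) * r ^ (-2 : ℝ)) (Ioi (t / 2)) :=
    (integrableOn_Ioi_rpow_of_lt (by norm_num) (by positivity)).const_mul _
  refine h.mono' ?_ ?_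
  · exact ((measurable_Qker.comp (f := fun r : ℝ => (2 * r, u))
      (by fun_prop)).const_mul 2).aestronglyMeasurable
  · filter_upwards [ae_restrict_mem measurableSet_Ioi] with r hr
    have hr0 : 0 < r := lt_trans (by positivity) hr
    have hpi := Real.pi_pos
    have := (abs_Qker_le (t := 2 * r) (by positivity) u).trans (Pker_div_le (by positivity) u)
    rw [norm_mul, Real.norm_two, Real.norm_eq_abs, Real.rpow_neg hr0.le, Real.rpow_two]
    refine (mul_le_mul_of_nonneg_left this zero_le_two).trans_eq ?_
    field_simp

lemma integral_Qker_two_mul {t : ℝ} (ht : 0 < t) (u : ℝ) :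
    ∫ r in Ioi (t / 2), 2 * Qker (2 * r) u = -Pker t u := by
  have h := integral_Ioi_of_hasDerivAt_of_tendsto' (a := t / 2)
    (f := fun r => Pker (2 * r) u) (f' := fun r => 2 * Qker (2 * r) u) (m := 0) ?_
    (integrableOn_Qker_two_mul ht u)
    ((tendsto_Pker_atTop u).comp (tendsto_id.const_mul_atTop zero_lt_two))
  · rw [h]
    ring_nf
  · intro r hr
    have hr0 : 0 < r := lt_of_lt_of_le (by positivity) hr
    have := (hasDerivAt_Pker (t := 2 * r) (by positivity) u).comp r
      ((hasDerivAt_id r).const_mul 2)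
    refine this.congr_deriv ?_
    ring

lemma Pker_le_Pker {t u v : ℝ} (ht : 0 < t) (h : u ^ 2 ≤ v ^ 2) : Pker t v ≤ Pker t u := by
  have hpi := Real.pi_pos
  unfold Pker
  gcongr

/-- The `L₁` modulus of continuity of the Poisson kernel. -/
lemma lintegral_Pker_sub_le {r t : ℝ} (hr : 0 < r) (ht : 0 < t) :
    ∫⁻ v, ‖Pker r (v + t) - Pker r v‖ₑ ≤ ENNReal.ofReal (2 * t / (Real.pi * r)) := by
  have hpi := Real.pi_pos
  set E : ℝ → ℝ := fun v =>
    Real.pi⁻¹ * (Real.arctan ((v + t) / r) - Real.arctan ((v + 0) / r)) with hE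
  have hd : ∀ v, HasDerivAt E (Pker r (v + t) - Pker r v) v := by
    intro v
    refine (((hasDerivAt_arctan_div hr t v).sub
      (hasDerivAt_arctan_div hr 0 v)).const_mul Real.pi⁻¹).congr_deriv ?_
    rw [add_zero]
    field_simp
  have hint : Integrable (fun v => Pker r (v + t) - Pker r v) :=
    ((integrable_Pker hr).comp_add_right t).sub (integrable_Pker hr)
  have htop : Tendsto E atTop (𝓝 0) := by
    have h := ((tendsto_arctan_div_atTop hr t).sub
      (tendsto_arctan_div_atTop hr 0)).const_mul Real.pi⁻¹
    rwa [sub_self, mul_zero] at h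
  have hbot : Tendsto E atBot (𝓝 0) := by
    have h := ((tendsto_arctan_div_atBot hr t).sub
      (tendsto_arctan_div_atBot hr 0)).const_mul Real.pi⁻¹
    rwa [sub_self, mul_zero] at h
  have h1 := integral_Ioi_of_hasDerivAt_of_tendsto' (a := -t / 2) (fun v _ => hd v)
    hint.integrableOn htop
  have h2 := integral_Iic_of_hasDerivAt_of_tendsto' (a := -t / 2) (fun v _ => hd v)
    hint.integrableOn hbot
  have hEval : E (-t / 2) = 2 * Real.pi⁻¹ * Real.arctan (t / (2 * r)) := by
    have e1 : (-t / 2 + t) / r = t / (2 * r) := by field_simp; ring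
    have e2 : (-t / 2 + 0) / r = -(t / (2 * r)) := by field_simp; ring
    simp only [hE, e1, e2, Real.arctan_neg]
    ring
  have hat : Real.arctan (t / (2 * r)) ≤ t / (2 * r) := by
    have h0 : 0 ≤ t / (2 * r) := by positivity
    simpa [Real.tan_arctan] using
      Real.le_tan (Real.arctan_nonneg.2 h0) (Real.arctan_lt_pi_div_two _)
  rw [← ofReal_integral_norm_eq_lintegral_enorm hint]
  apply ENNReal.ofReal_le_ofReal
  rw [← intervalIntegral.integral_Iic_add_Ioi (b := -t / 2) hint.norm.integrableOn
    hint.norm.integrableOn]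
  have h3 : ∫ v in Iic (-t / 2), ‖Pker r (v + t) - Pker r v‖ = E (-t / 2) := by
    rw [← sub_zero (E _), ← h2]
    refine setIntegral_congr_fun measurableSet_Iic fun v hv => ?_
    simp only [mem_Iic] at hv
    exact Real.norm_of_nonneg (sub_nonneg.2 (Pker_le_Pker hr (by nlinarith)))
  have h4 : ∫ v in Ioi (-t / 2), ‖Pker r (v + t) - Pker r v‖ = E (-t / 2) := by
    rw [← neg_inj, ← zero_sub (E _), ← h1, ← integral_neg]
    refine setIntegral_congr_fun measurableSet_Ioi fun v hv => ?_
    simp only [mem_Ioi] at hv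
    simp only [Real.norm_eq_abs]
    rw [abs_of_nonpos (sub_nonpos.2 (Pker_le_Pker hr (by nlinarith))), neg_neg]
  rw [h3, h4, hEval]
  calc _ = 4 * Real.pi⁻¹ * Real.arctan (t / (2 * r)) := by ring
    _ ≤ 4 * Real.pi⁻¹ * (t / (2 * r)) := by gcongr
    _ = _ := by field_simp; norm_num

open ENNReal

/-- Jensen's inequality for `x ↦ x ^ q`, `q ≥ 1`, for an unnormalized weight. -/
lemma lintegral_mul_rpow_le {α : Type*} [MeasurableSpace α] {μ : Measure α} {q : ℝ} (hq : 1 ≤ q)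
    {φ w : α → ℝ≥0∞} (hφ : Measurable φ) (hw : Measurable w) :
    (∫⁻ x, φ x * w x ∂μ) ^ q ≤ (∫⁻ x, w x ∂μ) ^ (q - 1) * ∫⁻ x, φ x ^ q * w x ∂μ := by
  rcases hq.eq_or_lt with rfl | hq1
  · simp
  have hq0 : 0 < q := by linarith
  have hconj : q.HolderConjugate q.conjExponent := .conjExponent hq1
  have h := ENNReal.lintegral_mul_le_Lp_mul_Lq (μ.withDensity w) hconj hφ.aemeasurable
    (aemeasurable_const (b := 1))
  have h2 (g : α → ℝ≥0∞) (hg : Measurable g) :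
      ∫⁻ x, g x ∂(μ.withDensity w) = ∫⁻ x, g x * w x ∂μ := by
    rw [lintegral_withDensity_eq_lintegral_mul _ hw hg]
    simp only [Pi.mul_apply, mul_comm]
  simp only [Pi.mul_apply, mul_one, ENNReal.one_rpow] at h
  rw [h2 _ hφ, h2 _ (hφ.pow_const q), h2 _ measurable_const] at h
  simp only [one_mul] at h
  refine (ENNReal.rpow_le_rpow h hq0.le).trans_eq ?_
  rw [ENNReal.mul_rpow_of_nonneg _ _ hq0.le, ← ENNReal.rpow_mul, ← ENNReal.rpow_mul,
    one_div_mul_cancel hq0.ne', ENNReal.rpow_one, mul_comm]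
  congr 2
  rw [Real.conjExponent]
  field_simp

/-- **Minkowski's integral inequality** for functions with values in `ℝ≥0∞`. -/
lemma lintegral_lintegral_rpow_le {α β : Type*} [MeasurableSpace α] [MeasurableSpace β]
    {μ : Measure α} {ν : Measure β} [SFinite μ] [SFinite ν] {p : ℝ} (hp : 1 ≤ p)
    {F : α → β → ℝ≥0∞} (hF : Measurable (Function.uncurry F)) :
    (∫⁻ x, (∫⁻ y, F x y ∂ν) ^ p ∂μ) ^ (1 / p) ≤ ∫⁻ y, (∫⁻ x, F x y ^ p ∂μ) ^ (1 / p) ∂ν := by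
  have hp0 : 0 < p := by linarith
  set N : β → ℝ≥0∞ := fun y => (∫⁻ x, F x y ^ p ∂μ) ^ (1 / p) with hN
  have hNp (y : β) : N y ^ p = ∫⁻ x, F x y ^ p ∂μ := by
    rw [hN, ← ENNReal.rpow_mul, one_div_mul_cancel hp0.ne', ENNReal.rpow_one]
  have hNm : Measurable N :=
    (Measurable.lintegral_prod_left' (hF.pow_const p)).pow_const (1 / p)
  set S := ∫⁻ y, N y ∂ν with hS
  by_cases hStop : S = ∞
  · rw [hStop]; exact le_top
  have hNfin : ∀ᵐ y ∂ν, N y < ∞ := ae_lt_top hNm hStop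
  have hFm (y : β) : Measurable fun x => F x y := hF.comp measurable_prodMk_right
  have hFx (x : α) : Measurable (F x) := hF.comp measurable_prodMk_left
  have hae : ∀ᵐ x ∂μ, ∀ᵐ y ∂ν, F x y = F x y / N y * N y := by
    rw [Measure.ae_ae_comm]
    · filter_upwards [hNfin] with y hy
      by_cases h0 : N y = 0
      · have : ∫⁻ x, F x y ^ p ∂μ = 0 := by rw [← hNp, h0, ENNReal.zero_rpow_of_pos hp0]
        rw [lintegral_eq_zero_iff ((hFm y).pow_const p)] at this
        filter_upwards [this] with x hx
        rw [h0, mul_zero]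
        exact (ENNReal.rpow_eq_zero_iff_of_pos hp0).1 hx
      · exact ae_of_all _ fun x => (ENNReal.div_mul_cancel h0 hy.ne).symm
    · exact measurableSet_eq_fun hF ((hF.div (hNm.comp measurable_snd)).mul
        (hNm.comp measurable_snd))
  have key : ∫⁻ x, (∫⁻ y, F x y ∂ν) ^ p ∂μ ≤ S ^ p := by
    calc ∫⁻ x, (∫⁻ y, F x y ∂ν) ^ p ∂μ
        ≤ ∫⁻ x, S ^ (p - 1) * ∫⁻ y, (F x y / N y) ^ p * N y ∂ν ∂μ := by
          refine lintegral_mono_ae ?_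
          filter_upwards [hae] with x hx
          rw [lintegral_congr_ae hx]
          exact lintegral_mul_rpow_le hp ((hFx x).div hNm) hNm
      _ = S ^ (p - 1) * ∫⁻ y, ∫⁻ x, (F x y / N y) ^ p * N y ∂μ ∂ν := by
          have hm : Measurable (Function.uncurry fun x y => (F x y / N y) ^ p * N y) :=
            ((hF.div (hNm.comp measurable_snd)).pow_const p).mul (hNm.comp measurable_snd)
          rw [← lintegral_lintegral_swap hm.aemeasurable]
          exact lintegral_const_mul _ hm.lintegral_prod_right'
      _ ≤ S ^ (p - 1) * S := by
          gcongr
          refine lintegral_mono fun y => ?_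
          simp_rw [ENNReal.div_rpow_of_nonneg _ _ hp0.le, div_eq_mul_inv]
          rw [lintegral_mul_const _ (((hFm y).pow_const p).mul_const _),
            lintegral_mul_const _ ((hFm y).pow_const p), ← hNp]
          exact (mul_le_mul_left (ENNReal.mul_inv_le_one _) _).trans_eq (one_mul _)
      _ = S ^ p := by
          nth_rewrite 2 [← ENNReal.rpow_one S]
          rw [← ENNReal.rpow_add_of_nonneg _ _ (by linarith) zero_le_one, sub_add_cancel]
  calc _ ≤ (S ^ p) ^ (1 / p) := ENNReal.rpow_le_rpow key (by positivity)
    _ = S := by rw [← ENNReal.rpow_mul, mul_one_div_cancel hp0.ne', ENNReal.rpow_one]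

lemma lintegral_Ioi_rpow_neg_three_halves {s : ℝ} (hs : 0 < s) :
    ∫⁻ r in Ioi s, ENNReal.ofReal (r ^ (-(3 / 2) : ℝ)) =
      ENNReal.ofReal (2 * s ^ (-(1 / 2) : ℝ)) := by
  rw [← ofReal_integral_eq_lintegral_ofReal (integrableOn_Ioi_rpow_of_lt (by norm_num) hs),
    integral_Ioi_rpow_of_lt (by norm_num) hs]
  · congr 1
    norm_num
    ring
  · filter_upwards [ae_restrict_mem measurableSet_Ioi] with r hr
    exact Real.rpow_nonneg (hs.trans hr).le _

lemma lintegral_Ioo_rpow_neg_half {s : ℝ} (hs : 0 < s) :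
    ∫⁻ t in Ioo 0 s, ENNReal.ofReal (t ^ (-(1 / 2) : ℝ)) =
      ENNReal.ofReal (2 * s ^ (1 / 2 : ℝ)) := by
  have hi : IntervalIntegrable (fun t : ℝ => t ^ (-(1 / 2) : ℝ)) volume 0 s :=
    intervalIntegral.intervalIntegrable_rpow' (by norm_num)
  rw [restrict_Ioo_eq_restrict_Ioc, ← ofReal_integral_eq_lintegral_ofReal
    ((intervalIntegrable_iff_integrableOn_Ioc_of_le hs.le).1 hi),
    ← intervalIntegral.integral_of_le hs.le, integral_rpow (by left; norm_num)]
  · congr 1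
    norm_num
    ring
  · filter_upwards [ae_restrict_mem measurableSet_Ioc] with r hr
    exact Real.rpow_nonneg hr.1.le _

lemma hardy_const {q t : ℝ} (ht : 0 < t) :
    t ^ (-(1 + q / 2)) * ((4 * t / Real.pi) ^ q * (2 * (t / 2) ^ (-(1 / 2) : ℝ)) ^ (q - 1)) =
      (4 / Real.pi) ^ q * (2 * Real.sqrt 2) ^ (q - 1) * t ^ (-(1 / 2) : ℝ) := by
  have hpi := Real.pi_pos
  have h1 : 2 * (t / 2) ^ (-(1 / 2) : ℝ) = (2 * Real.sqrt 2) * t ^ (-(1 / 2) : ℝ) := by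
    rw [Real.div_rpow ht.le zero_le_two, Real.rpow_neg zero_le_two, Real.sqrt_eq_rpow]
    field_simp
  have h2 : 4 * t / Real.pi = 4 / Real.pi * t := by ring
  rw [h1, h2, Real.mul_rpow (by positivity) ht.le, Real.mul_rpow (by positivity) (by positivity),
    ← Real.rpow_mul ht.le]
  have h3 : t ^ (-(1 / 2) : ℝ) = t ^ (-(1 + q / 2)) * t ^ q * t ^ (-(1 / 2) * (q - 1)) := by
    rw [← Real.rpow_add ht, ← Real.rpow_add ht]
    congr 1
    ring
  rw [h3]
  ring

/-- Hardy's inequality, in the form needed for the kernel `4t/(πr)` on `r > t/2`. -/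
lemma hardy_lintegral {q : ℝ} (hq : 1 ≤ q) {G : ℝ → ℝ≥0∞} (hG : Measurable G) :
    ∫⁻ t in Ioi (0 : ℝ), ENNReal.ofReal (t ^ (-(1 + q / 2))) *
        (∫⁻ r in Ioi (t / 2), ENNReal.ofReal (4 * t / (Real.pi * r)) * G r) ^ q ≤
      ENNReal.ofReal (8 * Real.sqrt 2 / Real.pi) ^ q *
        ∫⁻ r in Ioi (0 : ℝ), ENNReal.ofReal (r ^ (q / 2 - 1)) * G r ^ q := by
  have hpi := Real.pi_pos
  have hq0 : 0 < q := by linarith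
  set K : ℝ := (4 / Real.pi) ^ q * (2 * Real.sqrt 2) ^ (q - 1) with hK
  have hK0 : 0 ≤ K := by positivity
  set b : ℝ → ℝ≥0∞ := fun r => ENNReal.ofReal (r ^ (q / 2 - 3 / 2)) * G r ^ q with hb
  have hbm : Measurable b := by fun_prop
  have step (t : ℝ) (ht : 0 < t) :
      ENNReal.ofReal (t ^ (-(1 + q / 2))) *
        (∫⁻ r in Ioi (t / 2), ENNReal.ofReal (4 * t / (Real.pi * r)) * G r) ^ q ≤
      ENNReal.ofReal K * (ENNReal.ofReal (t ^ (-(1 / 2) : ℝ)) * ∫⁻ r in Ioi (t / 2), b r) := by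
    have ht2 : 0 < t / 2 := by positivity
    have e1 : ∫⁻ r in Ioi (t / 2), ENNReal.ofReal (4 * t / (Real.pi * r)) * G r =
        ENNReal.ofReal (4 * t / Real.pi) * ∫⁻ r in Ioi (t / 2),
          (ENNReal.ofReal (r ^ (1 / 2 : ℝ)) * G r) * ENNReal.ofReal (r ^ (-(3 / 2) : ℝ)) := by
      rw [← lintegral_const_mul _ (by fun_prop)]
      refine setLIntegral_congr_fun measurableSet_Ioi fun r hr => ?_
      have hr0 : 0 < r := ht2.trans hr
      have : 4 * t / (Real.pi * r) = 4 * t / Real.pi * (r ^ (1 / 2 : ℝ) * r ^ (-(3 / 2) : ℝ)) := by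
        rw [← Real.rpow_add hr0]
        norm_num
        rw [Real.rpow_neg_one]
        field_simp
      rw [this, ENNReal.ofReal_mul (by positivity), ENNReal.ofReal_mul (by positivity)]
      ring
    have e2 : ∫⁻ r in Ioi (t / 2), (ENNReal.ofReal (r ^ (1 / 2 : ℝ)) * G r) ^ q *
        ENNReal.ofReal (r ^ (-(3 / 2) : ℝ)) = ∫⁻ r in Ioi (t / 2), b r := by
      refine setLIntegral_congr_fun measurableSet_Ioi fun r hr => ?_
      have hr0 : 0 < r := ht2.trans hr
      simp only [hb]
      rw [ENNReal.mul_rpow_of_nonneg _ _ hq0.le,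
        ENNReal.ofReal_rpow_of_nonneg (by positivity) hq0.le, ← Real.rpow_mul hr0.le,
        mul_right_comm,
        ← ENNReal.ofReal_mul (by positivity), ← Real.rpow_add hr0]
      ring_nf
    have hJ := lintegral_mul_rpow_le (μ := volume.restrict (Ioi (t / 2))) hq
      (φ := fun r => ENNReal.ofReal (r ^ (1 / 2 : ℝ)) * G r)
      (w := fun r => ENNReal.ofReal (r ^ (-(3 / 2) : ℝ))) (by fun_prop) (by fun_prop)
    rw [e2, lintegral_Ioi_rpow_neg_three_halves ht2] at hJ
    rw [e1, ENNReal.mul_rpow_of_nonneg _ _ hq0.le]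
    calc _ ≤ ENNReal.ofReal (t ^ (-(1 + q / 2))) * (ENNReal.ofReal (4 * t / Real.pi) ^ q *
          (ENNReal.ofReal (2 * (t / 2) ^ (-(1 / 2) : ℝ)) ^ (q - 1) *
            ∫⁻ r in Ioi (t / 2), b r)) := by gcongr
      _ = _ := by
        rw [ENNReal.ofReal_rpow_of_nonneg (by positivity) hq0.le,
          ENNReal.ofReal_rpow_of_nonneg (by positivity) (by linarith), ← mul_assoc, ← mul_assoc,
          ← mul_assoc, mul_assoc (ENNReal.ofReal (t ^ (-(1 + q / 2)))),
          ← ENNReal.ofReal_mul (by positivity), ← ENNReal.ofReal_mul (by positivity),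
          ← ENNReal.ofReal_mul (by positivity), hardy_const ht]
  have swap : ∫⁻ t in Ioi (0 : ℝ), ENNReal.ofReal (t ^ (-(1 / 2) : ℝ)) *
      ∫⁻ r in Ioi (t / 2), b r =
      ∫⁻ r in Ioi (0 : ℝ), b r * ∫⁻ t in Ioo 0 (2 * r), ENNReal.ofReal (t ^ (-(1 / 2) : ℝ)) := by
    set k : ℝ → ℝ → ℝ≥0∞ := fun t r =>
      {x : ℝ × ℝ | 0 < x.1 ∧ x.1 < 2 * x.2}.indicator
        (fun x => ENNReal.ofReal (x.1 ^ (-(1 / 2) : ℝ)) * b x.2) (t, r) with hk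
    have hkm : Measurable (Function.uncurry k) := by
      refine Measurable.indicator (by fun_prop) ?_
      exact (measurableSet_lt measurable_const measurable_fst).inter
        (measurableSet_lt measurable_fst (measurable_snd.const_mul 2))
    have l1 : ∫⁻ t in Ioi (0 : ℝ), ENNReal.ofReal (t ^ (-(1 / 2) : ℝ)) *
        ∫⁻ r in Ioi (t / 2), b r = ∫⁻ t, ∫⁻ r, k t r := by
      rw [← lintegral_indicator measurableSet_Ioi]
      refine lintegral_congr fun t => ?_
      by_cases ht : 0 < t
      · rw [indicator_of_mem (mem_Ioi.2 ht), ← lintegral_const_mul _ hbm,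
          ← lintegral_indicator measurableSet_Ioi]
        refine lintegral_congr fun r => ?_
        simp only [hk, indicator, mem_Ioi, mem_ofPred_eq, ht, true_and,
          div_lt_iff₀' (zero_lt_two' ℝ)]
      · rw [indicator_of_notMem (by simpa using ht)]
        simp [hk, indicator, ht]
    have l2 : ∫⁻ r in Ioi (0 : ℝ), b r * ∫⁻ t in Ioo 0 (2 * r),
        ENNReal.ofReal (t ^ (-(1 / 2) : ℝ)) = ∫⁻ r, ∫⁻ t, k t r := by
      rw [← lintegral_indicator measurableSet_Ioi]
      refine lintegral_congr fun r => ?_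
      by_cases hr : 0 < r
      · rw [indicator_of_mem (mem_Ioi.2 hr), ← lintegral_const_mul _ (by fun_prop),
          ← lintegral_indicator measurableSet_Ioo]
        refine lintegral_congr fun t => ?_
        simp only [hk, indicator, mem_Ioo, mem_ofPred_eq, mul_comm (b r)]
      · rw [indicator_of_notMem (by simpa using hr)]
        have (t : ℝ) : ¬ (0 < t ∧ t < 2 * r) := fun h => hr (by linarith [h.1, h.2])
        simp [hk, indicator, this]
    rw [l1, l2, lintegral_lintegral_swap hkm.aemeasurable]
  calc _ ≤ ∫⁻ t in Ioi (0 : ℝ), ENNReal.ofReal K *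
        (ENNReal.ofReal (t ^ (-(1 / 2) : ℝ)) * ∫⁻ r in Ioi (t / 2), b r) :=
        setLIntegral_mono' measurableSet_Ioi fun t ht => step t ht
    _ = ENNReal.ofReal K * ∫⁻ r in Ioi (0 : ℝ), b r * ∫⁻ t in Ioo 0 (2 * r),
          ENNReal.ofReal (t ^ (-(1 / 2) : ℝ)) := by
        rw [lintegral_const_mul' _ _ ENNReal.ofReal_ne_top, swap]
    _ = ENNReal.ofReal (8 * Real.sqrt 2 / Real.pi) ^ q *
        ∫⁻ r in Ioi (0 : ℝ), ENNReal.ofReal (r ^ (q / 2 - 1)) * G r ^ q := by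
        rw [ENNReal.ofReal_rpow_of_nonneg (by positivity) hq0.le,
          ← lintegral_const_mul' _ _ ENNReal.ofReal_ne_top,
          ← lintegral_const_mul' _ _ ENNReal.ofReal_ne_top]
        refine setLIntegral_congr_fun measurableSet_Ioi fun r hr => ?_
        have hr0 : 0 < r := hr
        simp only [hb]
        rw [lintegral_Ioo_rpow_neg_half (by positivity), mul_right_comm, ← mul_assoc, ← mul_assoc,
          ← mul_assoc, ← ENNReal.ofReal_mul (by positivity), ← ENNReal.ofReal_mul (by positivity),
          ← ENNReal.ofReal_mul (by positivity)]
        congr 2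
        have h1 : 8 * Real.sqrt 2 / Real.pi = 4 / Real.pi * (2 * Real.sqrt 2) := by ring
        have h2 : (2 * Real.sqrt 2) ^ q = (2 * Real.sqrt 2) ^ (q - 1) * (2 * Real.sqrt 2) := by
          rw [← Real.rpow_add_one (by positivity), sub_add_cancel]
        have h3 : r ^ (q / 2 - 1) = r ^ (q / 2 - 3 / 2) * r ^ (1 / 2 : ℝ) := by
          rw [← Real.rpow_add hr0]
          ring_nf
        rw [h1, Real.mul_rpow (x := 4 / Real.pi) (by positivity) (by positivity), h2, h3,
          Real.mul_rpow zero_le_two hr0.le, Real.sqrt_eq_rpow]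
        simp only [hK, Real.sqrt_eq_rpow]
        ring

lemma ofReal_integral_norm_rpow_le {α E : Type*} [NormedAddCommGroup E]
    [MeasurableSpace α] (μ : Measure α) {p : ℝ} (hp : 0 ≤ p) (g : α → E) :
    ENNReal.ofReal (∫ x, ‖g x‖ ^ p ∂μ) ≤ ∫⁻ x, ‖g x‖ₑ ^ p ∂μ := by
  by_cases hi : Integrable (fun x => ‖g x‖ ^ p) μ
  · rw [ofReal_integral_eq_lintegral_ofReal hi (ae_of_all _ fun x => by positivity)]
    refine lintegral_mono fun x => ?_
    rw [← ENNReal.ofReal_rpow_of_nonneg (norm_nonneg _) hp, ofReal_norm]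
  · rw [integral_undef hi]
    simp

lemma hasCompactSupport_vertical {E : Type*} [Zero E] {f : HR → E}
    (hs : HasCompactSupport f) (h : HR) :
    HasCompactSupport fun u : ℝ => f (h.1, h.2.1, h.2.2 - u) := by
  refine hs.comp_isClosedEmbedding (g := fun u : ℝ => ((h.1, h.2.1, h.2.2 - u) : HR)) ?_
  refine Topology.IsClosedEmbedding.of_continuous_injective_isClosedMap ?_ ?_ ?_
  · fun_prop
  · intro a b hab
    simpa using hab
  · have h1 : IsClosedMap fun z : ℝ × ℝ => (h.1, z) := isClosedMap_prodMk_left h.1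
    have h2 : IsClosedMap fun z : ℝ => (h.2.1, z) := isClosedMap_prodMk_left h.2.1
    exact (h1.comp h2).comp (Homeomorph.subLeft h.2.2).isClosedMap

variable {X : Type*} [NormedAddCommGroup X] [NormedSpace ℝ X]

lemma integrable_kernel_smul {k : ℝ → ℝ} (hk : Integrable k) {φ : ℝ → X} (hφ : Continuous φ)
    {C : ℝ} (hC : ∀ u, ‖φ u‖ ≤ C) : Integrable (fun u => k u • φ u) :=
  hk.smul_bdd C hφ.aestronglyMeasurable (ae_of_all _ hC)

lemma integral_Pker_smul [CompleteSpace X] {t : ℝ} (ht : 0 < t) {φ : ℝ → X} (hφ : Continuous φ)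
    (hs : HasCompactSupport φ) :
    ∫ u, Pker t u • φ u = -∫ r in Ioi (t / 2), ∫ u, (2 * Qker (2 * r) u) • φ u := by
  have hpi := Real.pi_pos
  have ht2 : 0 < t / 2 := by positivity
  have hφi : Integrable φ := hφ.integrable_of_hasCompactSupport hs
  have hr2 : IntegrableOn (fun r : ℝ => (1 / (2 * Real.pi)) * r ^ (-2 : ℝ)) (Ioi (t / 2)) :=
    (integrableOn_Ioi_rpow_of_lt (by norm_num) ht2).const_mul _
  have hint : Integrable (Function.uncurry fun u r => (2 * Qker (2 * r) u) • φ u)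
      (volume.prod (volume.restrict (Ioi (t / 2)))) := by
    refine (hφi.norm.mul_prod hr2).mono' ?_ ?_
    · refine AEStronglyMeasurable.smul ?_ (hφ.comp continuous_fst).aestronglyMeasurable
      exact ((measurable_Qker.comp (f := fun x : ℝ × ℝ => (2 * x.2, x.1))
        (by fun_prop)).const_mul 2).aestronglyMeasurable
    · have : ∀ᵐ x : ℝ × ℝ ∂(volume.prod (volume.restrict (Ioi (t / 2)))), x.2 ∈ Ioi (t / 2) :=
        Measure.quasiMeasurePreserving_snd.ae (ae_restrict_mem measurableSet_Ioi)
      filter_upwards [this] with x hx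
      have hr0 : 0 < x.2 := ht2.trans hx
      have := (abs_Qker_le (t := 2 * x.2) (by positivity) x.1).trans
        (Pker_div_le (by positivity) x.1)
      rw [Function.uncurry, norm_smul, norm_mul, Real.norm_two, Real.norm_eq_abs,
        Real.rpow_neg hr0.le, Real.rpow_two, mul_comm]
      refine mul_le_mul_of_nonneg_left ?_ (norm_nonneg _)
      refine (mul_le_mul_of_nonneg_left this zero_le_two).trans_eq ?_
      field_simp
  rw [← integral_integral_swap hint, ← integral_neg]
  refine integral_congr_ae (ae_of_all _ fun u => ?_)
  simp only []
  rw [integral_smul_const, integral_Qker_two_mul ht, neg_smul, neg_neg]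

lemma integral_Qker_smul [CompleteSpace X] {r : ℝ} (hr : 0 < r) {φ : ℝ → X} (hφ : Continuous φ)
    {C : ℝ} (hC : ∀ u, ‖φ u‖ ≤ C) :
    ∫ x, Qker (2 * r) x • φ x = ∫ v, Pker r v • ∫ u, Qker r u • φ (u + v) := by
  have hint : Integrable (Function.uncurry fun v x : ℝ => (Pker r v * Qker r (x - v)) • φ x)
      (volume.prod volume) := by
    have h : Integrable (fun p : ℝ × ℝ => Pker r p.2 * Qker r (p.1 - p.2))
        (volume.prod volume) :=
      (integrable_Pker hr).convolution_integrand (ContinuousLinearMap.mul ℝ ℝ) (integrable_Qker hr)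
    exact h.swap.smul_bdd C (hφ.comp continuous_snd).aestronglyMeasurable
      (ae_of_all _ fun x => hC x.2)
  have h1 (v : ℝ) : Pker r v • ∫ u, Qker r u • φ (u + v) =
      ∫ x, (Pker r v * Qker r (x - v)) • φ x := by
    rw [← integral_sub_right_eq_self (fun u => Qker r u • φ (u + v)) v, ← integral_smul]
    refine integral_congr_ae (ae_of_all _ fun x => ?_)
    simp only [sub_add_cancel, smul_smul]
  simp_rw [h1]
  rw [integral_integral_swap hint]
  have h0 : ∀ᵐ x : ℝ, x ≠ 0 := by simp [ae_iff]
  refine integral_congr_ae ?_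
  filter_upwards [h0] with x hx
  have h2 : ∫ v, Pker r v * Qker r (x - v) = ∫ v, Pker r (x - v) * Qker r v := by
    rw [← integral_sub_left_eq_self (fun v => Pker r v * Qker r (x - v)) volume x]
    simp only [_root_.sub_sub_cancel]
  rw [integral_smul_const, h2, integral_Pker_sub_mul_Qker hr hx]

lemma norm_integral_Qker_smul_le {r : ℝ} (hr : 0 < r) {φ : ℝ → X}
    {C : ℝ} (hC : ∀ u, ‖φ u‖ ≤ C) :
    ‖∫ u, Qker r u • φ u‖ ≤ (∫ u, ‖Qker r u‖) * C := by
  rw [← integral_mul_const]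
  refine norm_integral_le_of_norm_le ((integrable_Qker hr).norm.mul_const C)
    (ae_of_all _ fun u => ?_)
  rw [norm_smul]
  gcongr
  exact hC u

lemma stronglyMeasurable_integral_Qker_smul {φ : ℝ → X} (hφ : Continuous φ) :
    StronglyMeasurable (fun x : ℝ × ℝ => ∫ u, Qker x.1 u • φ (u + x.2)) := by
  refine StronglyMeasurable.integral_prod_right
    (f := fun x (u : ℝ) => Qker (Prod.fst x) u • φ (u + Prod.snd x)) ?_
  refine StronglyMeasurable.smul ?_ (Continuous.stronglyMeasurable (by fun_prop))
  exact (measurable_Qker.comp (f := fun x : (ℝ × ℝ) × ℝ => (x.1.1, x.2))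
    (by fun_prop)).stronglyMeasurable

lemma integral_Qker_smul_sub [CompleteSpace X] {r t : ℝ} (hr : 0 < r)
    {φ : ℝ → X} (hφ : Continuous φ) {C : ℝ} (hC : ∀ u, ‖φ u‖ ≤ C) :
    ∫ u, Qker (2 * r) u • (φ (u - t) - φ u) =
      ∫ v, (Pker r (v + t) - Pker r v) • ∫ u, Qker r u • φ (u + v) := by
  set W : ℝ → X := fun v => ∫ u, Qker r u • φ (u + v) with hW
  have hWm : StronglyMeasurable W :=
    (stronglyMeasurable_integral_Qker_smul hφ).comp_measurable measurable_prodMk_left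
  have hWb (v : ℝ) : ‖W v‖ ≤ (∫ u, ‖Qker r u‖) * C :=
    norm_integral_Qker_smul_le hr fun u => hC _
  have h2r : 0 < 2 * r := by positivity
  have hφt : Continuous fun u => φ (u - t) := by fun_prop
  have i1 : Integrable fun v => Pker r v • W v :=
    (integrable_Pker hr).smul_bdd _ hWm.aestronglyMeasurable (ae_of_all _ hWb)
  have i2 : Integrable fun v => Pker r (v + t) • W v :=
    ((integrable_Pker hr).comp_add_right t).smul_bdd _ hWm.aestronglyMeasurable (ae_of_all _ hWb)
  simp_rw [smul_sub, sub_smul]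
  rw [integral_sub (integrable_kernel_smul (integrable_Qker h2r) hφt fun u => hC _)
    (integrable_kernel_smul (integrable_Qker h2r) hφ hC), integral_sub i2 i1,
    integral_Qker_smul hr hφ hC, integral_Qker_smul hr hφt fun u => hC _]
  congr 1
  rw [← integral_sub_right_eq_self (fun v => Pker r (v + t) • W v) t]
  have e (u v : ℝ) : u + v - t = u + (v - t) := by ring
  simp only [sub_add_cancel, hW, e]

lemma enorm_integral_Pker_smul_sub_le [CompleteSpace X] {t : ℝ} (ht : 0 < t)
    {φ : ℝ → X} (hφ : Continuous φ) (hs : HasCompactSupport φ) :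
    ‖(∫ u, Pker t u • φ (u - t)) - ∫ u, Pker t u • φ u‖ₑ ≤
      ∫⁻ r in Ioi (t / 2), ∫⁻ v, 2 * ‖Pker r (v + t) - Pker r v‖ₑ *
        ‖∫ u, Qker r u • φ (u + v)‖ₑ := by
  obtain ⟨C, hC⟩ := hs.exists_bound_of_continuous hφ
  have hφt : Continuous fun u => φ (u - t) := by fun_prop
  have hst : HasCompactSupport fun u => φ (u - t) :=
    hs.comp_homeomorph (Homeomorph.subRight t)
  rw [← integral_sub (integrable_kernel_smul (integrable_Pker ht) hφt fun u => hC _)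
    (integrable_kernel_smul (integrable_Pker ht) hφ hC)]
  simp_rw [← smul_sub]
  have hP := integral_Pker_smul ht (hφt.sub hφ) (hst.sub hs)
  simp only [Pi.sub_apply] at hP
  rw [hP, enorm_neg]
  refine (enorm_integral_le_lintegral_enorm _).trans
    (setLIntegral_mono' measurableSet_Ioi fun r hr => ?_)
  have hr0 : 0 < r := lt_trans (by positivity) hr
  simp_rw [mul_smul]
  rw [integral_smul, integral_Qker_smul_sub hr0 hφ hC, enorm_smul]
  have h2 : ‖(2 : ℝ)‖ₑ = 2 := by
    rw [Real.enorm_eq_ofReal zero_le_two]; simp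
  rw [h2]
  simp_rw [mul_assoc]
  rw [lintegral_const_mul' _ _ (by simp)]
  gcongr
  refine (enorm_integral_le_lintegral_enorm _).trans_eq ?_
  simp_rw [enorm_smul]

/-- The central translations are the translations along the last coordinate. -/
lemma vmul_eq_add (s : ℝ) (h : HR) : vmul s h = h + (0, 0, s) := by
  ext <;> simp [vmul]

instance isAddRightInvariant_volume : (volume : Measure HR).IsAddRightInvariant := by
  have : (volume : Measure (ℝ × ℝ)).IsAddRightInvariant :=
    inferInstanceAs ((volume : Measure ℝ).prod volume).IsAddRightInvariant
  exact inferInstanceAs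
    ((volume : Measure ℝ).prod (volume : Measure (ℝ × ℝ))).IsAddRightInvariant

lemma lintegral_vmul (g : HR → ℝ≥0∞) (s : ℝ) : ∫⁻ h, g (vmul s h) = ∫⁻ h, g h := by
  simp_rw [vmul_eq_add]
  exact lintegral_add_right_eq_self g _

lemma stronglyMeasurable_conv_Qker {f : HR → X} (hf : Continuous f) :
    StronglyMeasurable (fun x : ℝ × HR => conv (Qker x.1) f x.2) := by
  refine StronglyMeasurable.integral_prod_right
    (f := fun (x : ℝ × HR) (u : ℝ) => Qker x.1 u • f (x.2.1, x.2.2.1, x.2.2.2 - u)) ?_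
  refine StronglyMeasurable.smul ?_ (Continuous.stronglyMeasurable (by fun_prop))
  exact (measurable_Qker.comp (f := fun x : (ℝ × HR) × ℝ => (x.1.1, x.2))
    (by fun_prop)).stronglyMeasurable

lemma stronglyMeasurable_conv_Qker_vmul {f : HR → X} (hf : Continuous f) :
    StronglyMeasurable
      (fun x : HR × (ℝ × ℝ) => conv (Qker x.2.1) f (vmul (-x.2.2) x.1)) := by
  refine StronglyMeasurable.integral_prod_right
    (f := fun (x : HR × (ℝ × ℝ)) (u : ℝ) =>
      Qker x.2.1 u • f (x.1.1, x.1.2.1, x.1.2.2 + -x.2.2 - u)) ?_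
  refine StronglyMeasurable.smul ?_ (Continuous.stronglyMeasurable (by fun_prop))
  exact (measurable_Qker.comp (f := fun x : (HR × (ℝ × ℝ)) × ℝ => (x.1.2.1, x.2))
    (by fun_prop)).stronglyMeasurable

/-- The `L_p` norm of `Q_r * f`, with values in `ℝ≥0∞`. -/
noncomputable def gnorm (p : ℝ) (f : HR → X) (r : ℝ) : ℝ≥0∞ :=
  (∫⁻ h, ‖conv (Qker r) f h‖ₑ ^ p) ^ (1 / p)

lemma measurable_gnorm (p : ℝ) {f : HR → X} (hf : Continuous f) : Measurable (gnorm p f) :=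
  (Measurable.lintegral_prod_right'
    ((stronglyMeasurable_conv_Qker hf).enorm.pow_const p)).pow_const (1 / p)

lemma enorm_conv_Pker_vmul_sub_le [CompleteSpace X] {t : ℝ} (ht : 0 < t) {f : HR → X}
    (hf : Continuous f) (hs : HasCompactSupport f) (h : HR) :
    ‖conv (Pker t) f (vmul t h) - conv (Pker t) f h‖ₑ ≤
      ∫⁻ r in Ioi (t / 2), ∫⁻ v, 2 * ‖Pker r (v + t) - Pker r v‖ₑ *
        ‖conv (Qker r) f (vmul (-v) h)‖ₑ := by
  have key := enorm_integral_Pker_smul_sub_le ht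
    (φ := fun u : ℝ => f (h.1, h.2.1, h.2.2 - u)) (by fun_prop) (hasCompactSupport_vertical hs h)
  have e1 (u : ℝ) : h.2.2 + t - u = h.2.2 - (u - t) := by ring
  have e2 (u v : ℝ) : h.2.2 + -v - u = h.2.2 - (u + v) := by ring
  simp only [conv, vmul, e1, e2]
  exact key

/-- The `L_p` norm of the vertical increment of `P_t * f` is controlled by the `L_p` norms of
`Q_r * f` for `r > t / 2`. -/
lemma lintegral_increment_le [CompleteSpace X] {p t : ℝ} (hp : 1 ≤ p) (ht : 0 < t) {f : HR → X}
    (hf : Continuous f) (hs : HasCompactSupport f) :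
    (∫⁻ h, ‖conv (Pker t) f (vmul t h) - conv (Pker t) f h‖ₑ ^ p) ^ (1 / p) ≤
      ∫⁻ r in Ioi (t / 2), ENNReal.ofReal (4 * t / (Real.pi * r)) * gnorm p f r := by
  have hp0 : 0 < p := by linarith
  set F : HR → ℝ × ℝ → ℝ≥0∞ := fun h x =>
    2 * ‖Pker x.1 (x.2 + t) - Pker x.1 x.2‖ₑ * ‖conv (Qker x.1) f (vmul (-x.2) h)‖ₑ with hF
  have hkm : Measurable fun x : ℝ × ℝ => 2 * ‖Pker x.1 (x.2 + t) - Pker x.1 x.2‖ₑ :=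
    (((measurable_Pker.comp (f := fun x : ℝ × ℝ => (x.1, x.2 + t)) (by fun_prop)).sub
      measurable_Pker).enorm).const_mul 2
  have hcm : Measurable fun x : HR × (ℝ × ℝ) =>
      ‖conv (Qker x.2.1) f (vmul (-x.2.2) x.1)‖ₑ :=
    (stronglyMeasurable_conv_Qker_vmul hf).enorm
  have hFm : Measurable (Function.uncurry F) := (hkm.comp measurable_snd).mul hcm
  have hFx (h : HR) : Measurable (F h) := hFm.of_uncurry_left
  have hFN (x : ℝ × ℝ) : (∫⁻ h, F h x ^ p) ^ (1 / p) =
      2 * ‖Pker x.1 (x.2 + t) - Pker x.1 x.2‖ₑ * gnorm p f x.1 := by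
    simp only [hF]
    simp_rw [ENNReal.mul_rpow_of_nonneg (_ * _) _ hp0.le]
    rw [lintegral_const_mul' _ _ (by finiteness),
      lintegral_vmul (fun h => ‖conv (Qker x.1) f h‖ₑ ^ p),
      ENNReal.mul_rpow_of_nonneg _ _ (by positivity), ← ENNReal.rpow_mul,
      mul_one_div_cancel hp0.ne', ENNReal.rpow_one, gnorm]
  calc _ ≤ (∫⁻ h, (∫⁻ x, F h x ∂((volume.restrict (Ioi (t / 2))).prod volume)) ^ p) ^ (1 / p) := by
        gcongr with h
        rw [lintegral_prod _ (hFx h).aemeasurable]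
        exact enorm_conv_Pker_vmul_sub_le ht hf hs h
    _ ≤ ∫⁻ x, (∫⁻ h, F h x ^ p) ^ (1 / p) ∂((volume.restrict (Ioi (t / 2))).prod volume) :=
        lintegral_lintegral_rpow_le hp hFm
    _ = ∫⁻ r in Ioi (t / 2), ∫⁻ v, 2 * ‖Pker r (v + t) - Pker r v‖ₑ * gnorm p f r := by
        simp_rw [hFN]
        rw [lintegral_prod]
        exact (hkm.mul ((measurable_gnorm p hf).comp measurable_fst)).aemeasurable
    _ ≤ _ := by
        refine setLIntegral_mono' measurableSet_Ioi fun r hr => ?_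
        have hr0 : 0 < r := lt_trans (by positivity) hr
        have hpi := Real.pi_pos
        have hv : Measurable fun v => 2 * ‖Pker r (v + t) - Pker r v‖ₑ :=
          hkm.comp measurable_prodMk_left
        rw [lintegral_mul_const _ hv,
          lintegral_const_mul' _ _ (by simp)]
        gcongr
        calc _ ≤ 2 * ENNReal.ofReal (2 * t / (Real.pi * r)) := by
              gcongr
              exact lintegral_Pker_sub_le hr0 ht
          _ = _ := by
              rw [← ENNReal.ofReal_ofNat 2, ← ENNReal.ofReal_mul zero_le_two]
              ring_nf

lemma gnorm_lt_top {p r : ℝ} (hp : 1 ≤ p) (hr : 0 < r) {f : HR → X}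
    (hf : Continuous f) (hs : HasCompactSupport f) : gnorm p f r < ∞ := by
  have hp0 : 0 < p := by linarith
  have hfL : ∫⁻ h, ‖f h‖ₑ ^ p < ∞ := by
    have := (hf.memLp_of_hasCompactSupport (μ := volume) (p := ENNReal.ofReal p) hs).2
    rw [eLpNorm_lt_top_iff_lintegral_rpow_enorm_lt_top (by simpa using hp0) (by simp)] at this
    simpa [ENNReal.toReal_ofReal hp0.le] using this
  set F : HR → ℝ → ℝ≥0∞ := fun h u => ‖Qker r u‖ₑ * ‖f (vmul (-u) h)‖ₑ with hF
  have hQm : Measurable fun x : HR × ℝ => ‖Qker r x.2‖ₑ :=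
    (measurable_Qker.comp (f := fun x : HR × ℝ => (r, x.2)) (by fun_prop)).enorm
  have hfc : Continuous fun x : HR × ℝ => f (vmul (-x.2) x.1) := by
    unfold vmul; fun_prop
  have hFm : Measurable (Function.uncurry F) := hQm.mul hfc.stronglyMeasurable.enorm
  have hle (h : HR) : ‖conv (Qker r) f h‖ₑ ≤ ∫⁻ u, F h u := by
    refine (enorm_integral_le_lintegral_enorm _).trans_eq ?_
    simp only [hF, enorm_smul, vmul, sub_eq_add_neg]
  calc gnorm p f r ≤ (∫⁻ h, (∫⁻ u, F h u) ^ p) ^ (1 / p) := by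
        unfold gnorm
        gcongr with h
        exact hle h
    _ ≤ ∫⁻ u, (∫⁻ h, F h u ^ p) ^ (1 / p) := lintegral_lintegral_rpow_le hp hFm
    _ = ∫⁻ u, ‖Qker r u‖ₑ * (∫⁻ h, ‖f h‖ₑ ^ p) ^ (1 / p) := by
        refine lintegral_congr fun u => ?_
        simp only [hF]
        simp_rw [ENNReal.mul_rpow_of_nonneg _ _ hp0.le]
        rw [lintegral_const_mul' _ _ (by finiteness),
          lintegral_vmul (fun h => ‖f h‖ₑ ^ p),
          ENNReal.mul_rpow_of_nonneg _ _ (by positivity), ← ENNReal.rpow_mul,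
          mul_one_div_cancel hp0.ne', ENNReal.rpow_one]
    _ < ∞ := by
        have hc : (∫⁻ h, ‖f h‖ₑ ^ p) ^ (1 / p) < ∞ :=
          ENNReal.rpow_lt_top_of_nonneg (by positivity) hfL.ne
        rw [lintegral_mul_const' _ _ hc.ne]
        exact ENNReal.mul_lt_top (integrable_Qker hr).2 hc

lemma ofReal_integral_conv_Qker {p r : ℝ} (hp : 1 ≤ p) (hr : 0 < r) {f : HR → X}
    (hf : Continuous f) (hs : HasCompactSupport f) :
    ENNReal.ofReal ((∫ h : HR, ‖conv (Qker r) f h‖ ^ p) ^ (1 / p)) = gnorm p f r := by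
  have hp0 : 0 < p := by linarith
  have hm : StronglyMeasurable (conv (Qker r) f) :=
    (stronglyMeasurable_conv_Qker hf).comp_measurable measurable_prodMk_left
  have e (h : HR) : ‖conv (Qker r) f h‖ₑ ^ p = ENNReal.ofReal (‖conv (Qker r) f h‖ ^ p) := by
    rw [← ENNReal.ofReal_rpow_of_nonneg (norm_nonneg _) hp0.le, ofReal_norm]
  have hlt : ∫⁻ h, ‖conv (Qker r) f h‖ₑ ^ p < ∞ := by
    have := gnorm_lt_top hp hr hf hs
    rwa [gnorm, ENNReal.rpow_lt_top_iff_of_pos (by positivity)] at this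
  have hi : Integrable fun h => ‖conv (Qker r) f h‖ ^ p := by
    refine ⟨(hm.norm.measurable.pow_const p).aestronglyMeasurable, ?_⟩
    rw [hasFiniteIntegral_iff_ofReal (ae_of_all _ fun h => by positivity)]
    simpa only [e] using hlt
  rw [← ENNReal.ofReal_rpow_of_nonneg (integral_nonneg fun h => by positivity) (by positivity),
    ofReal_integral_eq_lintegral_ofReal hi (ae_of_all _ fun h => by positivity), gnorm]
  simp_rw [e]

lemma ofReal_increment_integrand_le [CompleteSpace X] {p q t : ℝ} (hp : 1 ≤ p) (hq : 1 ≤ q)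
    (ht : 0 < t) {f : HR → X}
    (hf : Continuous f) (hs : HasCompactSupport f) :
    ENNReal.ofReal ((∫ h : HR, ‖conv (Pker t) f (vmul t h) - conv (Pker t) f h‖ ^ p) ^ (q / p) /
        t ^ (1 + q / 2)) ≤
      ENNReal.ofReal (t ^ (-(1 + q / 2))) *
        (∫⁻ r in Ioi (t / 2), ENNReal.ofReal (4 * t / (Real.pi * r)) * gnorm p f r) ^ q := by
  have hp0 : 0 < p := by linarith
  have hq0 : 0 < q := by linarith
  rw [div_eq_mul_inv, ← Real.rpow_neg ht.le, mul_comm,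
    ENNReal.ofReal_mul (Real.rpow_nonneg ht.le _)]
  gcongr
  rw [← ENNReal.ofReal_rpow_of_nonneg (integral_nonneg fun h => by positivity) (by positivity),
    show q / p = 1 / p * q by ring, ENNReal.rpow_mul]
  gcongr
  refine le_trans ?_ (lintegral_increment_le hp ht hf hs)
  gcongr
  exact ofReal_integral_norm_rpow_le _ hp0.le _

end HR

open HR in
/-- Inequality (2.28): the Besov-type seminorm of the vertical increment of `P_t*f`
is at most `(8√2/π)` times the generalized Littlewood–Paley `g`-function expression. -/
theorem poisson_vertical_increment_bound (p q : ℝ) (hp : 1 ≤ p) (hq : 1 ≤ q)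
    (X : Type) [NormedAddCommGroup X] [NormedSpace ℝ X] [CompleteSpace X]
    (f : HR → X) (hf : ContDiff ℝ (⊤ : ℕ∞) f) (hsupp : HasCompactSupport f) :
    (∫⁻ t in Set.Ioi (0 : ℝ),
        ENNReal.ofReal
          ((∫ h : HR, ‖conv (Pker t) f (vmul t h) - conv (Pker t) f h‖ ^ p) ^ (q / p) /
            t ^ (1 + q / 2))) ^ (1 / q) ≤
      ENNReal.ofReal (8 * Real.sqrt 2 / Real.pi) *
        (∫⁻ t in Set.Ioi (0 : ℝ),
          ENNReal.ofReal
            (t ^ (q / 2 - 1) *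
              ((∫ h : HR, ‖conv (Qker t) f h‖ ^ p) ^ (1 / p)) ^ q)) ^ (1 / q) := by
  have hp0 : 0 < p := by linarith
  have hq0 : 0 < q := by linarith
  have hc := hf.continuous
  have hr : ∫⁻ t in Set.Ioi (0 : ℝ), ENNReal.ofReal (t ^ (q / 2 - 1) *
      ((∫ h : HR, ‖conv (Qker t) f h‖ ^ p) ^ (1 / p)) ^ q) =
      ∫⁻ t in Set.Ioi (0 : ℝ), ENNReal.ofReal (t ^ (q / 2 - 1)) * gnorm p f t ^ q := by
    refine setLIntegral_congr_fun measurableSet_Ioi fun t ht => ?_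
    have ht0 : 0 < t := ht
    have hi : 0 ≤ (∫ h : HR, ‖conv (Qker t) f h‖ ^ p) ^ (1 / p) :=
      Real.rpow_nonneg (integral_nonneg fun h => by positivity) _
    rw [ENNReal.ofReal_mul (Real.rpow_nonneg ht0.le _),
      ← ENNReal.ofReal_rpow_of_nonneg hi hq0.le, ofReal_integral_conv_Qker hp ht0 hc hsupp]
  have hle := (setLIntegral_mono' measurableSet_Ioi fun t ht =>
    ofReal_increment_integrand_le hp hq ht hc hsupp).trans
      (hardy_lintegral hq (measurable_gnorm p hc))
  rw [hr]
  refine (ENNReal.rpow_le_rpow hle (by positivity : 0 ≤ 1 / q)).trans_eq ?_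
  rw [ENNReal.mul_rpow_of_nonneg _ _ (by positivity), ← ENNReal.rpow_mul,
    mul_one_div_cancel hq0.ne', ENNReal.rpow_one]
end
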